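/- arXiv:1905.12347 — 7 statements merged into one kernel-verified Lean document; each statement's English description precedes it below -/
import Mathlib

section
/- Let D ∈ R^{d×N} be a dictionary with unit-norm columns d_1,…,d_N and coherence μ, let x ∈ R^N be m-sparse with support Ω and x_min = min_{i∈Ω}|x_i|, and let y = Dx + σw where w ~ N(0, I_d) and σ > 0. Suppose μ < 1/(2m−1), that m ≤ N^β for some 0 < β < 1, and that for some α ≥ 0, x_min ≥ (σ/(1−(2m−1)μ))·(1+√β)·√(2(1+α)log N). Then OMP run for m iterations returns the estimated support Λ̂_m = Ω with probability at least 1 − (1/√(π(1+α)log N))·(N^{−α} + N^{−αβ}/√β). -/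
open MeasureTheory ProbabilityTheory Real

noncomputable section

/-- Euclidean dot product on `ℝ^n`. -/
def dot {n : ℕ} (u v : Fin n → ℝ) : ℝ := ∑ i, u i * v i

/-- Coherence of a dictionary, given by its columns: `max_{i ≠ j} |⟨d_i, d_j⟩|`. -/
def coherence {d N : ℕ} (D : Fin N → Fin d → ℝ) : ℝ :=
  sSup {x : ℝ | ∃ i j : Fin N, i ≠ j ∧ x = |dot (D i) (D j)|}

/-- Standard Gaussian measure `N(0, I_d)` on `ℝ^d`. -/
def stdGaussian (d : ℕ) : Measure (Fin d → ℝ) :=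
  Measure.pi fun _ => gaussianReal 0 1

/-- The ompResidual `y - D z`. -/
def ompResidual {d N : ℕ} (D : Fin N → Fin d → ℝ) (y : Fin d → ℝ) (z : Fin N → ℝ) :
    Fin d → ℝ :=
  y - ∑ l, z l • D l

/-- A run of `T` iterations of Orthogonal Matching Pursuit on the signal `y` with
dictionary `D`: `Λ t` is the estimated support and `z t` the estimated coefficient
vector after `t` iterations.  At each iteration an atom maximizing the absolute
correlation with the current ompResidual is added to the support, and the new estimate
is a least-squares minimizer among vectors supported on the current support. -/
def IsOMPRun {d N : ℕ} (D : Fin N → Fin d → ℝ) (y : Fin d → ℝ) (T : ℕ)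
    (Λ : ℕ → Finset (Fin N)) (z : ℕ → Fin N → ℝ) : Prop :=
  Λ 0 = ∅ ∧ z 0 = 0 ∧
  ∀ t : ℕ, t < T →
    (∃ j : Fin N,
      (∀ i : Fin N, |dot (D i) (ompResidual D y (z t))| ≤ |dot (D j) (ompResidual D y (z t))|) ∧
      Λ (t + 1) = insert j (Λ t)) ∧
    (∀ i, i ∉ Λ (t + 1) → z (t + 1) i = 0) ∧
    (∀ u : Fin N → ℝ, (∀ i, i ∉ Λ (t + 1) → u i = 0) →
      Real.sqrt (dot (ompResidual D y (z (t + 1))) (ompResidual D y (z (t + 1)))) ≤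
        Real.sqrt (dot (ompResidual D y u) (ompResidual D y u)))

lemma dot_res_eq {d N : ℕ} (a : Fin d → ℝ) (D : Fin N → Fin d → ℝ) (e : Fin N → ℝ)
    (n : Fin d → ℝ) :
    dot a ((∑ l, e l • D l) + n) = (∑ l, e l * dot a (D l)) + dot a n := by
  have h : ∀ u v : Fin d → ℝ, dot u v = u ⬝ᵥ v := fun _ _ => rfl
  simp only [h, dotProduct_add, dotProduct_sum, dotProduct_smul, smul_eq_mul]

lemma omp_orth {d N : ℕ} (D : Fin N → Fin d → ℝ) (hunit : ∀ i, dot (D i) (D i) = 1)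
    (y : Fin d → ℝ) (z : Fin N → ℝ) (Λ : Finset (Fin N)) (k : Fin N) (hk : k ∈ Λ)
    (hz : ∀ i, i ∉ Λ → z i = 0)
    (hmin : ∀ u : Fin N → ℝ, (∀ i, i ∉ Λ → u i = 0) →
      Real.sqrt (dot (ompResidual D y z) (ompResidual D y z)) ≤
        Real.sqrt (dot (ompResidual D y u) (ompResidual D y u))) :
    dot (D k) (ompResidual D y z) = 0 := by
  have h : ∀ u v : Fin d → ℝ, dot u v = u ⬝ᵥ v := fun _ _ => rfl
  set r := ompResidual D y z with hr
  set s := dot (D k) r with hs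
  have h1 := hmin (z + Pi.single k s) (by
    intro i hi
    have : i ≠ k := fun h => hi (h ▸ hk)
    simp [hz i hi, this])
  have h2 : ompResidual D y (z + Pi.single k s) = r - s • D k := by
    simp only [hr, ompResidual, Pi.add_apply, add_smul, Finset.sum_add_distrib]
    rw [Finset.sum_eq_single k (f := fun l => (Pi.single k s : Fin N → ℝ) l • D l)]
    · simp [sub_sub]
    · intro b _ hb; simp [hb]
    · simp
  have h0 : 0 ≤ dot (r - s • D k) (r - s • D k) :=
    Finset.sum_nonneg fun i _ => mul_self_nonneg _
  rw [h2, Real.sqrt_le_sqrt_iff h0] at h1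
  have h3 : dot (r - s • D k) (r - s • D k) = dot r r - s ^ 2 := by
    have hu := hunit k
    have hs' : r ⬝ᵥ D k = s := by rw [dotProduct_comm]; exact hs.symm
    have hs'' : D k ⬝ᵥ r = s := hs.symm
    simp only [h] at hu ⊢
    simp only [sub_dotProduct, dotProduct_sub, smul_dotProduct, dotProduct_smul, hu, hs', hs'',
      smul_eq_mul]
    ring
  nlinarith [sq_nonneg s]

lemma omp_step {d N : ℕ} (D : Fin N → Fin d → ℝ) (hunit : ∀ i, dot (D i) (D i) = 1)
    (μ : ℝ) (hμ0 : 0 ≤ μ) (hμ : ∀ i j, i ≠ j → |dot (D i) (D j)| ≤ μ)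
    (Ω : Finset (Fin N)) (e : Fin N → ℝ) (he : ∀ i, i ∉ Ω → e i = 0)
    (n : Fin d → ℝ) (a b : ℝ) (hb : 0 ≤ b)
    (hin : ∀ i ∈ Ω, |dot (D i) n| < a) (hout : ∀ i, i ∉ Ω → |dot (D i) n| < b)
    (hM : 0 < 1 - (2 * (Ω.card : ℝ) - 1) * μ)
    (i0 : Fin N) (hi0 : i0 ∈ Ω) (hX : a + b ≤ (1 - (2 * (Ω.card : ℝ) - 1) * μ) * |e i0|)
    (j : Fin N) (hj : ∀ i, |dot (D i) ((∑ l, e l • D l) + n)| ≤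
      |dot (D j) ((∑ l, e l • D l) + n)|) :
    j ∈ Ω ∧ dot (D j) ((∑ l, e l • D l) + n) ≠ 0 := by
  obtain ⟨k, hk, hkmax⟩ := Finset.exists_max_image Ω (fun i => |e i|) ⟨i0, hi0⟩
  set E := |e k| with hE
  have hE0 : 0 ≤ E := abs_nonneg _
  have hsum : ∀ i, ∑ l, e l * dot (D i) (D l) = ∑ l ∈ Ω, e l * dot (D i) (D l) := by
    intro i
    symm
    apply Finset.sum_subset (Finset.subset_univ _)
    intro l _ hl
    simp [he l hl]
  have hXE : a + b ≤ (1 - (2 * (Ω.card : ℝ) - 1) * μ) * E :=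
    hX.trans (mul_le_mul_of_nonneg_left (hkmax i0 hi0) hM.le)
  have hbd : ∀ i, ∀ S : Finset (Fin N), S ⊆ Ω → i ∉ S →
      |∑ l ∈ S, e l * dot (D i) (D l)| ≤ S.card * (E * μ) := by
    intro i S hS hi
    refine (Finset.abs_sum_le_sum_abs _ _).trans ?_
    rw [← nsmul_eq_mul]
    apply Finset.sum_le_card_nsmul
    intro l hl
    rw [abs_mul]
    exact mul_le_mul (hkmax l (hS hl)) (hμ i l (fun h => hi (h ▸ hl))) (abs_nonneg _) hE0
  have hlow : Ω.card * (E * μ) + b < |dot (D k) ((∑ l, e l • D l) + n)| := by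
    rw [dot_res_eq, hsum, ← Finset.add_sum_erase _ _ hk, hunit k, mul_one]
    have h1 := hbd k (Ω.erase k) (Finset.erase_subset _ _) (Finset.notMem_erase _ _)
    have hc : ((Ω.erase k).card : ℝ) = Ω.card - 1 := by
      rw [Finset.card_erase_of_mem hk, Nat.cast_sub (Finset.card_pos.2 ⟨k, hk⟩)]; simp
    rw [hc] at h1
    have h2 := hin k hk
    set q := ∑ l ∈ Ω.erase k, e l * dot (D k) (D l)
    set p := dot (D k) n
    have h3 : E ≤ |e k + q + p| + |q| + |p| := by
      have : e k = (e k + q + p) - q - p := by ring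
      calc E = |(e k + q + p) - q - p| := by rw [hE]; congr 1
        _ ≤ |(e k + q + p) - q| + |p| := abs_sub _ _
        _ ≤ _ := by gcongr; exact abs_sub _ _
    nlinarith
  have hpos : 0 ≤ Ω.card * (E * μ) := by positivity
  have hjk := hj k
  refine ⟨?_, ?_⟩
  · by_contra hjΩ
    have h1 := hbd j Ω subset_rfl hjΩ
    have h2 := hout j hjΩ
    rw [dot_res_eq (D j), hsum j] at hjk
    have := abs_add_le (∑ l ∈ Ω, e l * dot (D j) (D l)) (dot (D j) n)
    linarith
  · intro h0
    rw [h0, abs_zero] at hjk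
    linarith

lemma omp_det {d N m : ℕ} (D : Fin N → Fin d → ℝ) (hunit : ∀ i, dot (D i) (D i) = 1)
    (μ : ℝ) (hμ0 : 0 ≤ μ) (hμ : ∀ i j, i ≠ j → |dot (D i) (D j)| ≤ μ)
    (x : Fin N → ℝ) (Ω : Finset (Fin N)) (hsupp : ∀ i, i ∉ Ω → x i = 0) (hcard : Ω.card = m)
    (n : Fin d → ℝ) (a b : ℝ) (hb : 0 ≤ b)
    (hin : ∀ i ∈ Ω, |dot (D i) n| < a) (hout : ∀ i, i ∉ Ω → |dot (D i) n| < b)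
    (hM : 0 < 1 - (2 * (m : ℝ) - 1) * μ)
    (hX : ∀ i ∈ Ω, a + b ≤ (1 - (2 * (m : ℝ) - 1) * μ) * |x i|)
    (Λ : ℕ → Finset (Fin N)) (z : ℕ → Fin N → ℝ)
    (hrun : IsOMPRun D ((∑ j, x j • D j) + n) m Λ z) : Λ m = Ω := by
  obtain ⟨h0, hz0, hstep⟩ := hrun
  set y := (∑ j, x j • D j) + n with hy
  have key : ∀ t, t ≤ m → Λ t ⊆ Ω ∧ (Λ t).card = t ∧ (∀ i, i ∉ Λ t → z t i = 0) ∧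
      ∀ k ∈ Λ t, dot (D k) (ompResidual D y (z t)) = 0 := by
    intro t
    induction t with
    | zero => intro _; simp [h0, hz0]
    | succ t ih =>
      intro ht
      obtain ⟨i1, i2, i3, i4⟩ := ih (by omega)
      obtain ⟨⟨j, hj, hins⟩, hz, hmin⟩ := hstep t (by omega)
      have hres : ompResidual D y (z t) = (∑ l, (x - z t) l • D l) + n := by
        simp only [ompResidual, hy, Pi.sub_apply, sub_smul, Finset.sum_sub_distrib]
        abel
      obtain ⟨i0, hi0, hi0'⟩ : ∃ i ∈ Ω, i ∉ Λ t := by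
        by_contra! hcon
        have := Finset.card_le_card (show Ω ⊆ Λ t from hcon)
        omega
      have hs := omp_step D hunit μ hμ0 hμ Ω (x - z t) (by
          intro i hi
          simp [hsupp i hi, i3 i (fun h => hi (i1 h))]) n a b hb hin hout (by rwa [hcard]) i0 hi0
          (by rw [hcard]; simpa [i3 i0 hi0'] using hX i0 hi0) j (by rw [← hres]; exact hj)
      rw [← hres] at hs
      have hjn : j ∉ Λ t := fun h => hs.2 (i4 j h)
      refine ⟨?_, ?_, hz, ?_⟩
      · rw [hins]; exact Finset.insert_subset hs.1 i1
      · rw [hins, Finset.card_insert_of_notMem hjn, i2]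
      · intro k hk
        exact omp_orth D hunit y (z (t+1)) (Λ (t+1)) k hk hz hmin
  obtain ⟨k1, k2, -⟩ := key m le_rfl
  exact Finset.eq_of_subset_of_card_le k1 (by omega)

lemma map_dot_stdGaussian {d : ℕ} (a : Fin d → ℝ) (ha : dot a a = 1) :
    (Measure.pi fun _ : Fin d => gaussianReal 0 1).map (fun w => dot a w) = gaussianReal 0 1 := by
  have hmeas : Measurable (fun w : Fin d → ℝ => dot a w) := by
    unfold dot; fun_prop
  have : IsProbabilityMeasure
    ((Measure.pi fun _ : Fin d => gaussianReal 0 1).map (fun w => dot a w)) :=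
    Measure.isProbabilityMeasure_map hmeas.aemeasurable
  apply Measure.ext_of_charFun
  ext t
  rw [charFun_apply_real, integral_map hmeas.aemeasurable (by fun_prop), charFun_gaussianReal]
  have h1 : ∀ w : Fin d → ℝ, Complex.exp (t * (dot a w : ℝ) * Complex.I) =
      ∏ i, Complex.exp ((t * a i : ℝ) * (w i : ℝ) * Complex.I) := by
    intro w
    rw [← Complex.exp_sum, dot]
    congr 1
    push_cast
    rw [Finset.mul_sum, Finset.sum_mul]
    refine Finset.sum_congr rfl fun i _ => by ring
  simp_rw [h1]
  rw [integral_fintype_prod_eq_prod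
    (f := fun i x => Complex.exp ((t * a i : ℝ) * (x : ℝ) * Complex.I))]
  simp_rw [← charFun_apply_real, charFun_gaussianReal, ← Complex.exp_sum]
  congr 1
  have h2 : ∑ i, ((a i : ℝ) : ℂ) * a i = 1 := by
    have := congrArg (fun r : ℝ => (r : ℂ)) ha
    simpa [dot] using this
  calc _ = ∑ i, (-(t : ℂ) ^ 2 / 2) * (((a i : ℝ) : ℂ) * a i) := by
        refine Finset.sum_congr rfl fun i _ => ?_
        push_cast; ring
    _ = _ := by
        rw [← Finset.mul_sum, h2]; push_cast; ring

lemma gaussian_Ioi_le {t : ℝ} (ht : 0 < t) :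
    gaussianReal 0 1 (Set.Ioi t) ≤ ENNReal.ofReal ((√(2 * π))⁻¹ * (Real.exp (-t ^ 2 / 2) / t)) := by
  rw [gaussianReal_apply_eq_integral 0 one_ne_zero]
  apply ENNReal.ofReal_le_ofReal
  have hd : ∀ x ∈ Set.Ici t, HasDerivAt (fun x : ℝ => -((√(2 * π))⁻¹ * (Real.exp (-x ^ 2 / 2) / t)))
      ((√(2 * π))⁻¹ * (x / t * Real.exp (-x ^ 2 / 2))) x := by
    intro x _
    have h : HasDerivAt (fun x : ℝ => -x ^ 2 / 2) (-x) x := by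
      have h0 := (hasDerivAt_pow 2 x).neg.div_const 2
      have h1 : -(((2 : ℕ) : ℝ) * x ^ (2 - 1)) / 2 = -x := by norm_num; ring
      rw [h1] at h0
      exact h0
    have h2 := ((h.exp.div_const t).const_mul ((√(2 * π))⁻¹)).neg
    have h3 : -((√(2 * π))⁻¹ * (Real.exp (-x ^ 2 / 2) * -x / t)) =
        (√(2 * π))⁻¹ * (x / t * Real.exp (-x ^ 2 / 2)) := by ring
    rw [h3] at h2
    exact h2
  have hnn : ∀ x ∈ Set.Ioi t, 0 ≤ (√(2 * π))⁻¹ * (x / t * Real.exp (-x ^ 2 / 2)) := by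
    intro x hx
    have : 0 < x := ht.trans hx
    positivity
  have hlim : Filter.Tendsto (fun x : ℝ => -((√(2 * π))⁻¹ * (Real.exp (-x ^ 2 / 2) / t)))
      Filter.atTop (nhds 0) := by
    have h1 : Filter.Tendsto (fun x : ℝ => -x ^ 2 / 2) Filter.atTop Filter.atBot := by
      have : Filter.Tendsto (fun x : ℝ => x ^ 2 / 2) Filter.atTop Filter.atTop :=
        (Filter.tendsto_pow_atTop two_ne_zero).atTop_div_const (by norm_num)
      convert Filter.tendsto_neg_atTop_atBot.comp this using 1
      ext x; simp; ring
    have h2 := ((Real.tendsto_exp_atBot.comp h1).div_const t).const_mul ((√(2 * π))⁻¹)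
    simpa using h2.neg
  have hI := integral_Ioi_of_hasDerivAt_of_nonneg' hd hnn hlim
  have hInt := integrableOn_Ioi_deriv_of_nonneg' hd hnn hlim
  rw [zero_sub, neg_neg] at hI
  rw [← hI]
  apply setIntegral_mono_on (integrable_gaussianPDFReal 0 1).integrableOn hInt measurableSet_Ioi
  intro x hx
  have hx' : 1 ≤ x / t := by rw [le_div_iff₀ ht]; linarith [Set.mem_Ioi.1 hx]
  simp only [gaussianPDFReal, NNReal.coe_one, mul_one, sub_zero]
  gcongr
  exact le_mul_of_one_le_left (Real.exp_pos _).le hx'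

lemma gaussian_abs_le {t : ℝ} (ht : 0 < t) :
    gaussianReal 0 1 {x | t ≤ |x|} ≤
      ENNReal.ofReal (2 * (√(2 * π))⁻¹ * (Real.exp (-t ^ 2 / 2) / t)) := by
  have : NullMeasurableSet (Set.Iio (-t)) (gaussianReal 0 1) := measurableSet_Iio.nullMeasurableSet
  have hna : NullSingletonClass (gaussianReal 0 1) := nullSingletonClass_gaussianReal one_ne_zero
  have h1 : gaussianReal 0 1 (Set.Ici t) = gaussianReal 0 1 (Set.Ioi t) :=
    (measure_congr Ioi_ae_eq_Ici).symm
  have h2 : gaussianReal 0 1 (Set.Iic (-t)) = gaussianReal 0 1 (Set.Ici t) := by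
    have hm : (gaussianReal 0 1).map (fun x : ℝ => -x) = gaussianReal 0 1 := by
      rw [gaussianReal_map_neg, neg_zero]
    conv_rhs => rw [← hm]
    rw [Measure.map_apply measurable_neg measurableSet_Ici]
    congr 1
    ext x; simp
  have h3 : {x : ℝ | t ≤ |x|} ⊆ Set.Ici t ∪ Set.Iic (-t) := by
    intro x hx
    rcases le_abs.1 (show t ≤ |x| from hx) with h | h
    · left; exact h
    · right; simp only [Set.mem_Iic]; linarith
  calc _ ≤ _ := measure_mono h3
    _ ≤ _ := measure_union_le _ _
    _ ≤ _ := by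
      rw [h2, h1]
      refine (add_le_add (gaussian_Ioi_le ht) (gaussian_Ioi_le ht)).trans ?_
      rw [← ENNReal.ofReal_add (by positivity) (by positivity)]
      apply le_of_eq; congr 1; ring

lemma omp_tail {d : ℕ} (a : Fin d → ℝ) (ha : dot a a = 1) {t : ℝ} (ht : 0 < t) :
    (Measure.pi fun _ : Fin d => gaussianReal 0 1) {w | t ≤ |dot a w|} ≤
      ENNReal.ofReal (2 * (√(2 * π))⁻¹ * (Real.exp (-t ^ 2 / 2) / t)) := by
  have hmeas : Measurable (fun w : Fin d → ℝ => dot a w) := by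
    unfold dot; fun_prop
  refine le_trans (le_of_eq ?_) (gaussian_abs_le ht)
  conv_rhs => rw [← map_dot_stdGaussian a ha]
  rw [Measure.map_apply hmeas]
  · rfl
  · exact measurableSet_le measurable_const (by fun_prop)

/-- The Gaussian tail at level `√c * √(2(1+α) log N)`, multiplied by `N ^ c`. -/
lemma omp_tail_calc {N α c : ℝ} (hN : 1 < N) (hα : 0 ≤ α) (hc : 0 < c) :
    N ^ c * (2 * (√(2 * π))⁻¹ * (Real.exp (-(√c * √(2 * (1 + α) * Real.log N)) ^ 2 / 2) /
      (√c * √(2 * (1 + α) * Real.log N)))) =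
    1 / √(π * (1 + α) * Real.log N) * (1 / (N ^ (α * c) * √c)) := by
  have hL : 0 < Real.log N := Real.log_pos hN
  have hN0 : 0 < N := by linarith
  have hq : 0 < (1 + α) * Real.log N := by positivity
  have h1 : Real.exp (-(√c * √(2 * (1 + α) * Real.log N)) ^ 2 / 2) = (N ^ c)⁻¹ * (N ^ (α * c))⁻¹ := by
    rw [mul_pow, Real.sq_sqrt hc.le, Real.sq_sqrt (by positivity), ← Real.rpow_neg hN0.le,
      ← Real.rpow_neg hN0.le, ← Real.rpow_add hN0, Real.rpow_def_of_pos hN0]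
    congr 1; ring
  have h2 : √(2 * (1 + α) * Real.log N) = √2 * √((1 + α) * Real.log N) := by
    rw [mul_assoc, Real.sqrt_mul (by norm_num)]
  have h3 : √(π * (1 + α) * Real.log N) = √π * √((1 + α) * Real.log N) := by
    rw [mul_assoc, Real.sqrt_mul pi_pos.le]
  have h4 : √(2 * π) = √2 * √π := Real.sqrt_mul (by norm_num) _
  have h5 : √2 * √2 = (2 : ℝ) := Real.mul_self_sqrt (by norm_num)
  have hp : 0 < N ^ c := Real.rpow_pos_of_pos hN0 _
  have hp' : 0 < N ^ (α * c) := Real.rpow_pos_of_pos hN0 _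
  have hsp : 0 < √π := Real.sqrt_pos.2 pi_pos
  have hsc : 0 < √c := Real.sqrt_pos.2 hc
  have hsq : 0 < √((1 + α) * Real.log N) := Real.sqrt_pos.2 hq
  rw [h1, h2, h3, h4]
  have hs2 : 0 < √(2:ℝ) := by positivity
  field_simp
  linarith

/-- Theorem (sharper sufficient condition for OMP, fixed number of iterations):
under the MIP condition and the signal-to-noise condition
`x_min ≥ σ_eff (1 + √β) √(2(1+α) log N)`, OMP run for `m` iterations recovers the
support `Ω` of `x` with probability at least
`1 - (1/√(π(1+α) log N)) (N^{-α} + N^{-αβ}/√β)`. -/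
theorem omp_exact_support_recovery
    (d N m : ℕ) (D : Fin N → Fin d → ℝ)
    (hunit : ∀ i, dot (D i) (D i) = 1)
    (μ : ℝ) (hcoh : coherence D = μ)
    (x : Fin N → ℝ) (Ω : Finset (Fin N))
    (hsupp : ∀ i, i ∈ Ω ↔ x i ≠ 0) (hcard : Ω.card = m)
    (σ β α : ℝ) (hσ : 0 < σ) (hβ0 : 0 < β) (hβ1 : β < 1) (hα : 0 ≤ α)
    (hMIP : μ < 1 / (2 * (m : ℝ) - 1))
    (hmN : (m : ℝ) ≤ (N : ℝ) ^ β)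
    (hxmin : ∀ i ∈ Ω,
      σ / (1 - (2 * (m : ℝ) - 1) * μ) * (1 + Real.sqrt β) *
        Real.sqrt (2 * (1 + α) * Real.log N) ≤ |x i|) :
    ENNReal.ofReal
        (1 - 1 / Real.sqrt (π * (1 + α) * Real.log N) *
          (1 / (N : ℝ) ^ α + 1 / ((N : ℝ) ^ (α * β) * Real.sqrt β))) ≤
      stdGaussian d
        {w | ∀ (Λ : ℕ → Finset (Fin N)) (z : ℕ → Fin N → ℝ),
          IsOMPRun D ((∑ j, x j • D j) + σ • w) m Λ z → Λ m = Ω} := by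
  have hprob : IsProbabilityMeasure (_root_.stdGaussian d) := by
    unfold _root_.stdGaussian; infer_instance
  have hbnd0 : 0 ≤ 1 / Real.sqrt (π * (1 + α) * Real.log N) *
          (1 / (N : ℝ) ^ α + 1 / ((N : ℝ) ^ (α * β) * Real.sqrt β)) := by positivity
  have htriv : (∀ w : Fin d → ℝ, ∀ (Λ : ℕ → Finset (Fin N)) (z : ℕ → Fin N → ℝ),
          IsOMPRun D ((∑ j, x j • D j) + σ • w) m Λ z → Λ m = Ω) →
      ENNReal.ofReal
        (1 - 1 / Real.sqrt (π * (1 + α) * Real.log N) *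
          (1 / (N : ℝ) ^ α + 1 / ((N : ℝ) ^ (α * β) * Real.sqrt β))) ≤
      _root_.stdGaussian d
        {w | ∀ (Λ : ℕ → Finset (Fin N)) (z : ℕ → Fin N → ℝ),
          IsOMPRun D ((∑ j, x j • D j) + σ • w) m Λ z → Λ m = Ω} := by
    intro h
    rw [Set.eq_univ_of_forall (s := {w | _}) h, measure_univ]
    exact ENNReal.ofReal_le_one.2 (by linarith)
  rcases Nat.eq_zero_or_pos m with hm0 | hm
  · apply htriv
    intro w Λ z hrun
    subst hm0
    rw [hrun.1, Finset.card_eq_zero.1 hcard]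
  have hmN' : m ≤ N := by
    rw [← hcard]; simpa using Finset.card_le_univ Ω
  rcases (show N = 1 ∨ 2 ≤ N by omega) with hN1 | hN2
  · apply htriv
    intro w Λ z hrun
    have hm1 : m = 1 := by omega
    subst hN1
    subst hm1
    obtain ⟨⟨j, -, hj⟩, -⟩ := hrun.2.2 0 (by norm_num)
    have h1 : (Λ 1).card = Fintype.card (Fin 1) := by
      rw [show Λ 1 = insert j (Λ 0) from hj, hrun.1]; simp
    rw [Finset.card_eq_iff_eq_univ] at h1
    rw [h1, eq_comm, ← Finset.card_eq_iff_eq_univ, hcard]; simp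
  have hNr : (1 : ℝ) < N := by exact_mod_cast hN2
  have hmr : (1 : ℝ) ≤ m := by exact_mod_cast hm
  have hL : 0 < Real.log N := Real.log_pos hNr
  have hbdd : BddAbove {x : ℝ | ∃ i j : Fin N, i ≠ j ∧ x = |dot (D i) (D j)|} := by
    apply Set.Finite.bddAbove
    apply Set.Finite.subset (Set.finite_range fun p : Fin N × Fin N => |dot (D p.1) (D p.2)|)
    rintro _ ⟨i, j, -, rfl⟩
    exact ⟨(i, j), rfl⟩
  have hμ : ∀ i j, i ≠ j → |dot (D i) (D j)| ≤ μ := by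
    intro i j hij
    rw [← hcoh]
    exact le_csSup hbdd ⟨i, j, hij, rfl⟩
  have hμ0 : 0 ≤ μ := by
    rw [← hcoh]
    apply Real.sSup_nonneg
    rintro _ ⟨i, j, -, rfl⟩
    exact abs_nonneg _
  have hM : 0 < 1 - (2 * (m : ℝ) - 1) * μ := by
    rw [lt_div_iff₀ (by linarith)] at hMIP
    linarith
  set τ := Real.sqrt (2 * (1 + α) * Real.log N) with hτ
  have hτ0 : 0 < τ := Real.sqrt_pos.2 (by positivity)
  have hsβ : 0 < √β := Real.sqrt_pos.2 hβ0
  let A : Fin N → Set (Fin d → ℝ) := fun i => {w | √β * τ ≤ |dot (D i) w|}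
  let B : Fin N → Set (Fin d → ℝ) := fun i => {w | τ ≤ |dot (D i) w|}
  let bad : Set (Fin d → ℝ) := (⋃ i ∈ Ω, A i) ∪ ⋃ i ∈ (Finset.univ : Finset (Fin N)), B i
  have hdm : ∀ i, Measurable (fun w : Fin d → ℝ => dot (D i) w) := by
    intro i; unfold dot; fun_prop
  have hbadm : MeasurableSet bad := by
    apply MeasurableSet.union
    · exact Finset.measurableSet_biUnion _ fun i _ =>
        measurableSet_le measurable_const (continuous_abs.measurable.comp (hdm i))
    · exact Finset.measurableSet_biUnion _ fun i _ =>
        measurableSet_le measurable_const (continuous_abs.measurable.comp (hdm i))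
  have hsub : badᶜ ⊆ {w | ∀ (Λ : ℕ → Finset (Fin N)) (z : ℕ → Fin N → ℝ),
          IsOMPRun D ((∑ j, x j • D j) + σ • w) m Λ z → Λ m = Ω} := by
    intro w hw Λ z hrun
    simp only [bad, A, B, Set.mem_compl_iff, Set.mem_union, Set.mem_iUnion, Set.mem_ofPred_eq,
      Finset.mem_univ, exists_prop, true_and, not_or, not_exists, not_and, not_le] at hw
    have hdσ : ∀ i, |dot (D i) (σ • w)| = σ * |dot (D i) w| := by
      intro i
      have : dot (D i) (σ • w) = σ * dot (D i) w := by
        show D i ⬝ᵥ (σ • w) = σ * (D i ⬝ᵥ w)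
        rw [dotProduct_smul, smul_eq_mul]
      rw [this, abs_mul, abs_of_pos hσ]
    refine omp_det D hunit μ hμ0 hμ x Ω (fun i hi => ?_) hcard (σ • w) (σ * (√β * τ)) (σ * τ)
      (by positivity) (fun i hi => ?_) (fun i hi => ?_) hM (fun i hi => ?_) Λ z hrun
    · by_contra h; exact hi ((hsupp i).2 h)
    · rw [hdσ]; exact mul_lt_mul_of_pos_left (hw.1 i hi) hσ
    · rw [hdσ]; exact mul_lt_mul_of_pos_left (hw.2 i) hσ
    · have h := mul_le_mul_of_nonneg_left (hxmin i hi) hM.le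
      refine le_trans (le_of_eq ?_) h
      field_simp
      ring
  have hbad : _root_.stdGaussian d bad ≤ ENNReal.ofReal
      (1 / Real.sqrt (π * (1 + α) * Real.log N) *
          (1 / (N : ℝ) ^ α + 1 / ((N : ℝ) ^ (α * β) * Real.sqrt β))) := by
    have hsum : ∀ (S : Finset (Fin N)) (t c : ℝ), 0 < t → (S.card : ℝ) ≤ c →
        _root_.stdGaussian d (⋃ i ∈ S, {w | t ≤ |dot (D i) w|}) ≤
          ENNReal.ofReal (c * (2 * (√(2 * π))⁻¹ * (Real.exp (-t ^ 2 / 2) / t))) := by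
      intro S t c ht hc
      refine (measure_biUnion_finset_le _ _).trans ?_
      refine (Finset.sum_le_card_nsmul _ _ _ fun i _ => omp_tail (D i) (hunit i) ht).trans ?_
      rw [nsmul_eq_mul, ← ENNReal.ofReal_natCast, ← ENNReal.ofReal_mul (by positivity)]
      apply ENNReal.ofReal_le_ofReal
      gcongr
    have hA := hsum Ω (√β * τ) ((N : ℝ) ^ β) (by positivity) (by rw [hcard]; exact hmN)
    have hB := hsum Finset.univ τ ((N : ℝ) ^ (1 : ℝ)) hτ0 (by simp)
    have hcB := omp_tail_calc hNr hα one_pos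
    rw [omp_tail_calc hNr hα hβ0] at hA
    rw [Real.sqrt_one, one_mul, mul_one, mul_one] at hcB
    rw [hcB] at hB
    refine (measure_union_le _ _).trans ((add_le_add hA hB).trans ?_)
    rw [← ENNReal.ofReal_add (by positivity) (by positivity)]
    apply le_of_eq; congr 1; ring
  refine le_trans ?_ (measure_mono hsub)
  rw [prob_compl_eq_one_sub hbadm, ENNReal.ofReal_sub _ hbnd0, ENNReal.ofReal_one]
  exact tsub_le_tsub_left hbad 1

end
end

section
/- Let D ∈ R^{d×N} be a dictionary with unit-norm columns and coherence μ, let x ∈ R^N be m-sparse with support Ω, and let y = Dx + σw where w ~ N(0, I_d) and σ > 0. Suppose μ < 1/(2m−1), that m ≤ N^β for some 0 < β < 1, and that for some α ≥ 0, x_min ≥ (σ/(1−(2m−1)μ))·(1+√β)·√(2(1+α)log N). Then OMP* with threshold τ = σ√(2(1+α)log N) stops after exactly m iterations and its estimated support equals Ω, with probability at least 1 − (1/√(π(1+α)log N))·(N^{−α} + N^{−αβ}/√β). -/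
open MeasureTheory ProbabilityTheory Real

noncomputable section

/-! ### Gaussian tail bounds -/

lemma aux_law {d : ℕ} (v : Fin d → ℝ) (hv : dot v v = 1) :
    (_root_.stdGaussian d).map (fun w => dot v w) = gaussianReal 0 1 := by
  have hm : Measurable (fun w : Fin d → ℝ => dot v w) := by
    unfold dot; fun_prop
  have : IsProbabilityMeasure (_root_.stdGaussian d) := by
    unfold _root_.stdGaussian; infer_instance
  have : IsProbabilityMeasure ((_root_.stdGaussian d).map (fun w => dot v w)) :=
    Measure.isProbabilityMeasure_map hm.aemeasurable
  apply Measure.ext_of_charFun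
  ext t
  rw [charFun_apply_real, integral_map hm.aemeasurable (by fun_prop), charFun_gaussianReal]
  have h1 : ∀ w : Fin d → ℝ, Complex.exp (t * (dot v w : ℝ) * Complex.I)
      = ∏ i, (fun (i : Fin d) (u : ℝ) => Complex.exp ((t * v i : ℝ) * u * Complex.I)) i (w i) := by
    intro w
    rw [← Complex.exp_sum]
    congr 1
    simp only [dot]
    push_cast
    rw [Finset.mul_sum, Finset.sum_mul]
    exact Finset.sum_congr rfl fun i _ => by ring
  simp_rw [h1]
  unfold _root_.stdGaussian
  rw [integral_fintype_prod_eq_prod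
    (fun (i : Fin d) (u : ℝ) => Complex.exp ((t * v i : ℝ) * u * Complex.I))]
  simp_rw [← charFun_apply_real, charFun_gaussianReal]
  rw [← Complex.exp_sum]
  congr 1
  have : ((∑ i, v i * v i : ℝ) : ℂ) = 1 := by
    have := hv; unfold dot at this; rw [this]; simp
  push_cast at this
  simp only [mul_zero, zero_mul, zero_sub, Complex.ofReal_zero, NNReal.coe_one, Complex.ofReal_one, one_mul]
  have h2 : ∀ i, -(((t * v i : ℝ) : ℂ) ^ 2 / 2) = -((t:ℂ)^2/2) * ((v i : ℂ) * (v i : ℂ)) := by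
    intro i; push_cast; ring
  simp_rw [h2]
  rw [← Finset.mul_sum, this, mul_one]

lemma aux_mills (s : ℝ) (hs : 0 < s) :
    gaussianReal 0 1 (Set.Ici s) ≤ ENNReal.ofReal (1 / Real.sqrt (2 * π) * Real.exp (-s^2/2) / s) := by
  rw [gaussianReal_apply_eq_integral _ one_ne_zero]
  apply ENNReal.ofReal_le_ofReal
  rw [integral_Ici_eq_integral_Ioi]
  set g : ℝ → ℝ := fun x => -(1 / Real.sqrt (2 * π) * Real.exp (-x^2/2) / s) with hg
  set g' : ℝ → ℝ := fun x => x / s * (1 / Real.sqrt (2 * π) * Real.exp (-x^2/2)) with hg'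
  have hd : ∀ x ∈ Set.Ici s, HasDerivAt g (g' x) x := by
    intro x _
    have h1 : HasDerivAt (fun x : ℝ => -x^2/2) (-x) x := by
      have := ((hasDerivAt_pow 2 x).neg).div_const 2
      exact this.congr_deriv (by norm_num; ring)
    have := (((h1.exp).const_mul (1 / Real.sqrt (2 * π))).div_const s).neg
    exact this.congr_deriv (by change _ = x / s * _; ring)
  have hpos : ∀ x ∈ Set.Ioi s, 0 ≤ g' x := by
    intro x hx
    have : 0 < x := hs.trans hx
    change 0 ≤ x / s * (1 / Real.sqrt (2 * π) * Real.exp (-x^2/2))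
    positivity
  have hlim : Filter.Tendsto g Filter.atTop (nhds 0) := by
    have h1 : Filter.Tendsto (fun x : ℝ => -x^2/2) Filter.atTop Filter.atBot := by
      have : Filter.Tendsto (fun x : ℝ => x^2) Filter.atTop Filter.atTop :=
        Filter.tendsto_pow_atTop (by norm_num)
      have h2 := (Filter.tendsto_neg_atTop_atBot.comp this).atBot_div_const (r := 2) (by norm_num)
      exact h2
    have := (((Real.tendsto_exp_atBot.comp h1).const_mul (1 / Real.sqrt (2 * π))).div_const s).neg
    simpa [hg] using this
  have hint := integral_Ioi_of_hasDerivAt_of_nonneg' hd hpos hlim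
  have hintg := integrableOn_Ioi_deriv_of_nonneg' hd hpos hlim
  calc ∫ x in Set.Ioi s, gaussianPDFReal 0 1 x ≤ ∫ x in Set.Ioi s, g' x := by
        apply setIntegral_mono_on (integrable_gaussianPDFReal 0 1).integrableOn hintg measurableSet_Ioi
        intro x hx
        simp only [hg', gaussianPDFReal, NNReal.coe_one, mul_one, sub_zero, one_div]
        have : 1 ≤ x / s := by rw [le_div_iff₀ hs]; linarith [Set.mem_Ioi.mp hx]
        exact le_mul_of_one_le_left (by positivity) this
    _ = _ := by rw [hint]; simp [hg]

lemma aux_tail1 (s : ℝ) (hs : 0 < s) :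
    gaussianReal 0 1 {x | s ≤ |x|} ≤ ENNReal.ofReal (2 / Real.sqrt (2 * π) * Real.exp (-s^2/2) / s) := by
  have hsub : {x : ℝ | s ≤ |x|} ⊆ Set.Ici s ∪ (fun x => -x) ⁻¹' Set.Ici s := by
    intro x hx
    rcases le_abs.mp (Set.mem_ofPred.mp hx) with h | h
    · exact Or.inl h
    · exact Or.inr h
  have hneg : gaussianReal 0 1 ((fun x => -x) ⁻¹' Set.Ici s) = gaussianReal 0 1 (Set.Ici s) := by
    rw [← Measure.map_apply (by fun_prop) measurableSet_Ici, gaussianReal_map_neg, neg_zero]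
  calc _ ≤ _ := measure_mono hsub
    _ ≤ _ := measure_union_le _ _
    _ ≤ ENNReal.ofReal (1 / Real.sqrt (2 * π) * Real.exp (-s^2/2) / s) +
        ENNReal.ofReal (1 / Real.sqrt (2 * π) * Real.exp (-s^2/2) / s) := by
      rw [hneg]
      exact add_le_add (aux_mills s hs) (aux_mills s hs)
    _ = _ := by
      rw [← ENNReal.ofReal_add (by positivity) (by positivity)]
      congr 1; ring

lemma aux_dot_meas {d : ℕ} (v : Fin d → ℝ) : Measurable (fun w : Fin d → ℝ => dot v w) := by
  unfold dot; fun_prop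

lemma aux_dot_smul {d : ℕ} (c : ℝ) (v w : Fin d → ℝ) : dot (c • v) w = c * dot v w := by
  simp only [dot, Finset.mul_sum, Pi.smul_apply, smul_eq_mul]
  exact Finset.sum_congr rfl fun i _ => by ring

lemma aux_dot_comm {d : ℕ} (v w : Fin d → ℝ) : dot v w = dot w v := by
  simp only [dot]
  exact Finset.sum_congr rfl fun i _ => by ring

lemma aux_dot_self_nonneg {d : ℕ} (v : Fin d → ℝ) : 0 ≤ dot v v :=
  Finset.sum_nonneg fun _ _ => mul_self_nonneg _

lemma aux_tail {d : ℕ} (v : Fin d → ℝ) (hv : dot v v ≤ 1) (s : ℝ) (hs : 0 < s) :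
    _root_.stdGaussian d {w | s ≤ |dot v w|} ≤
      ENNReal.ofReal (2 / Real.sqrt (2 * π) * Real.exp (-s^2/2) / s) := by
  rcases (aux_dot_self_nonneg v).eq_or_lt with h0 | hpos
  · have hz : ∀ i, v i = 0 := by
      intro i
      have := (Finset.sum_eq_zero_iff_of_nonneg (fun i _ => mul_self_nonneg (v i))).mp
        (show ∑ i, v i * v i = 0 from h0.symm) i (Finset.mem_univ i)
      exact mul_self_eq_zero.mp this
    have : {w : Fin d → ℝ | s ≤ |dot v w|} = ∅ := by
      ext w
      simp [dot, hz, hs]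
    rw [this]; simp
  · set q := Real.sqrt (dot v v) with hq
    have hq0 : 0 < q := Real.sqrt_pos.mpr hpos
    have hq1 : q ≤ 1 := by
      rw [hq]; exact Real.sqrt_le_iff.mpr ⟨by norm_num, by simpa using hv⟩
    have hqq : q * q = dot v v := Real.mul_self_sqrt hpos.le
    have hu : dot (q⁻¹ • v) (q⁻¹ • v) = 1 := by
      rw [aux_dot_smul, aux_dot_comm, aux_dot_smul, ← hqq]; field_simp
    have hsub : {w : Fin d → ℝ | s ≤ |dot v w|} ⊆
        (fun w => dot (q⁻¹ • v) w) ⁻¹' {x | s ≤ |x|} := by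
      intro w hw
      simp only [Set.mem_ofPred_eq, Set.mem_preimage] at hw ⊢
      rw [aux_dot_smul, abs_mul, abs_of_pos (inv_pos.mpr hq0)]
      exact hw.trans (le_mul_of_one_le_left (abs_nonneg _) ((one_le_inv₀ hq0).mpr hq1))
    calc _ ≤ _ := measure_mono hsub
      _ = gaussianReal 0 1 {x | s ≤ |x|} := by
        rw [← aux_law _ hu, Measure.map_apply (aux_dot_meas _)
          (measurableSet_le measurable_const (by fun_prop))]
      _ ≤ _ := aux_tail1 s hs

/-! ### Deterministic analysis of OMP -/

lemma aux_dot_add_right {d : ℕ} (v a b : Fin d → ℝ) : dot v (a + b) = dot v a + dot v b := by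
  simp only [dot, Pi.add_apply, mul_add, Finset.sum_add_distrib]

lemma aux_dot_sub_right {d : ℕ} (v a b : Fin d → ℝ) : dot v (a - b) = dot v a - dot v b := by
  simp only [dot, Pi.sub_apply, mul_sub, Finset.sum_sub_distrib]

lemma aux_dot_smul_right {d : ℕ} (c : ℝ) (v w : Fin d → ℝ) : dot v (c • w) = c * dot v w := by
  rw [aux_dot_comm, aux_dot_smul, aux_dot_comm]

lemma aux_dot_sum_right {d N : ℕ} (v : Fin d → ℝ) (c : Fin N → ℝ) (D : Fin N → Fin d → ℝ) :
    dot v (∑ l, c l • D l) = ∑ l, c l * dot v (D l) := by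
  simp only [dot, Finset.sum_apply, Finset.mul_sum, Pi.smul_apply, smul_eq_mul]
  rw [Finset.sum_comm]
  exact Finset.sum_congr rfl fun i _ => Finset.sum_congr rfl fun j _ => by ring

lemma aux_cross {d N : ℕ} (D : Fin N → Fin d → ℝ) (μ : ℝ)
    (hμ : ∀ i j, i ≠ j → |dot (D i) (D j)| ≤ μ) (S : Finset (Fin N)) (c : Fin N → ℝ) (M : ℝ)
    (hM : ∀ j ∈ S, |c j| ≤ M) (i : Fin N) (hi : i ∉ S) :
    |∑ j ∈ S, c j * dot (D i) (D j)| ≤ S.card * μ * M := by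
  calc _ ≤ ∑ j ∈ S, |c j * dot (D i) (D j)| := Finset.abs_sum_le_sum_abs _ _
    _ ≤ ∑ j ∈ S, μ * M := by
      apply Finset.sum_le_sum
      intro j hj
      rw [abs_mul, mul_comm]
      have hij : i ≠ j := fun h => hi (h ▸ hj)
      exact mul_le_mul (hμ i j hij) (hM j hj) (abs_nonneg _) ((abs_nonneg _).trans (hμ i j hij))
    _ = _ := by simp [mul_assoc]

lemma aux_sum_supp {d N : ℕ} (D : Fin N → Fin d → ℝ) (S : Finset (Fin N)) (c : Fin N → ℝ)
    (hc : ∀ j, j ∉ S → c j = 0) (v : Fin d → ℝ) :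
    dot v (∑ l, c l • D l) = ∑ j ∈ S, c j * dot v (D j) := by
  rw [aux_dot_sum_right]
  symm
  apply Finset.sum_subset (Finset.subset_univ S)
  intro j _ hj
  rw [hc j hj, zero_mul]

/-- lower bound at a maximal coefficient -/
lemma aux_diag {d N : ℕ} (D : Fin N → Fin d → ℝ) (hunit : ∀ i, dot (D i) (D i) = 1) (μ : ℝ)
    (hμ : ∀ i j, i ≠ j → |dot (D i) (D j)| ≤ μ) (S : Finset (Fin N)) (c : Fin N → ℝ)
    (hc : ∀ j, j ∉ S → c j = 0) (i : Fin N) (hi : i ∈ S) (hM : ∀ j ∈ S, |c j| ≤ |c i|) :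
    (1 - ((S.card : ℝ) - 1) * μ) * |c i| ≤ |dot (D i) (∑ l, c l • D l)| := by
  rw [aux_sum_supp D S c hc, ← Finset.add_sum_erase S _ hi, hunit, mul_one]
  have h1 := aux_cross D μ hμ (S.erase i) c |c i|
    (fun j hj => hM j (Finset.mem_of_mem_erase hj)) i (Finset.notMem_erase i S)
  rw [Finset.card_erase_of_mem hi, Nat.cast_sub (Finset.card_pos.mpr ⟨i, hi⟩), Nat.cast_one] at h1
  have h2 := abs_sub_abs_le_abs_sub (c i) (-∑ j ∈ S.erase i, c j * dot (D i) (D j))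
  rw [abs_neg, sub_neg_eq_add] at h2
  linarith

lemma aux_exists_max {N : ℕ} (S : Finset (Fin N)) (hS : S.Nonempty) (c : Fin N → ℝ) :
    ∃ i ∈ S, ∀ j ∈ S, |c j| ≤ |c i| :=
  S.exists_max_image (fun i => |c i|) hS

/-- Least squares residuals are orthogonal to the selected atoms. -/
lemma aux_orth {d N : ℕ} (D : Fin N → Fin d → ℝ) (hunit : ∀ i, dot (D i) (D i) = 1)
    (y : Fin d → ℝ) (S : Finset (Fin N)) (z : Fin N → ℝ)
    (hz : ∀ i, i ∉ S → z i = 0)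
    (hmin : ∀ u : Fin N → ℝ, (∀ i, i ∉ S → u i = 0) →
      Real.sqrt (dot (ompResidual D y z) (ompResidual D y z)) ≤
        Real.sqrt (dot (ompResidual D y u) (ompResidual D y u))) (j : Fin N) (hj : j ∈ S) :
    dot (D j) (ompResidual D y z) = 0 := by
  set r := ompResidual D y z with hr
  set e := dot (D j) r with he
  have h := hmin (z + Pi.single j e) (by
    intro i hi
    have : i ≠ j := fun h => hi (h ▸ hj)
    simp [hz i hi, this])
  have hu : ompResidual D y (z + Pi.single j e) = r - e • D j := by
    rw [hr]
    unfold ompResidual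
    simp only [Pi.add_apply, add_smul, Finset.sum_add_distrib]
    rw [Finset.sum_eq_single_of_mem j (Finset.mem_univ j)
      (f := fun l => (Pi.single j e : Fin N → ℝ) l • D l)]
    · simp [sub_sub]
    · intro b _ hb
      simp [hb]
  rw [hu, Real.sqrt_le_sqrt_iff (aux_dot_self_nonneg _)] at h
  have h2 : dot (r - e • D j) (r - e • D j) = dot r r - e * e := by
    have hA : dot (r - e • D j) r = dot r r - e * e := by
      rw [aux_dot_comm, aux_dot_sub_right, aux_dot_smul_right, aux_dot_comm r (D j), ← he]
    have hB : dot (r - e • D j) (D j) = 0 := by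
      rw [aux_dot_comm, aux_dot_sub_right, aux_dot_smul_right, hunit, ← he]; ring
    rw [aux_dot_sub_right, aux_dot_smul_right, hA, hB]
    ring
  rw [h2] at h
  exact mul_self_eq_zero.mp (le_antisymm (by linarith) (mul_self_nonneg e))

/-- Existence of solutions of the normal equations. -/
lemma aux_proj {d N : ℕ} (D : Fin N → Fin d → ℝ) (S : Finset (Fin N)) (v : Fin d → ℝ) :
    ∃ a : Fin N → ℝ, (∀ i, i ∉ S → a i = 0) ∧
      ∀ k ∈ S, dot (D k) (v - ∑ l, a l • D l) = 0 := by
  classical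
  set f : Fin N → EuclideanSpace ℝ (Fin d) := fun i => WithLp.toLp 2 (D i) with hf
  obtain ⟨p, hp, q, hq, hpq⟩ := Submodule.exists_add_mem_mem_orthogonal
    (K := Submodule.span ℝ (f '' (S : Set (Fin N)))) (WithLp.toLp 2 v)
  rw [Submodule.mem_span_image_finset_iff_exists_fun'] at hp
  obtain ⟨c, hc⟩ := hp
  refine ⟨fun i => if i ∈ S then c i else 0, fun i hi => by simp [hi], fun k hk => ?_⟩
  have hq2 : q = WithLp.toLp 2 (v - ∑ l, (if l ∈ S then c l else 0) • D l) := by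
    have : q = WithLp.toLp 2 v - p := by rw [hpq]; simp
    rw [this, ← hc, WithLp.toLp_sub]
    congr 1
    simp only [hf, ite_smul, zero_smul, Finset.sum_ite_mem, Finset.univ_inter]
    ext i
    simp
  have h := (Submodule.mem_orthogonal _ _).mp hq (f k) (Submodule.subset_span ⟨k, hk, rfl⟩)
  rw [hq2] at h
  simp only [hf, PiLp.inner_apply] at h
  unfold dot
  refine Eq.trans (Finset.sum_congr rfl fun i _ => ?_) h
  simp [mul_comm]

/-- The deterministic core. -/
lemma aux_core {d N m : ℕ} (D : Fin N → Fin d → ℝ) (hunit : ∀ i, dot (D i) (D i) = 1) (μ : ℝ)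
    (hμ0 : 0 ≤ μ) (hμ : ∀ i j, i ≠ j → |dot (D i) (D j)| ≤ μ)
    (x : Fin N → ℝ) (Ω : Finset (Fin N)) (hx : ∀ i, i ∉ Ω → x i = 0) (hcard : Ω.card = m)
    (hm : 1 ≤ m) (hMIP : 0 < 1 - (2 * (m : ℝ) - 1) * μ) (σ s : ℝ) (hσ : 0 < σ) (hs : 0 ≤ s)
    (w : Fin d → ℝ) (g : Fin N → ℝ) (hg : ∀ i, i ∉ Ω → g i = 0)
    (hgo : ∀ k ∈ Ω, dot (D k) (w - ∑ l, g l • D l) = 0)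
    (h1 : ∀ i, i ∉ Ω → |dot (D i) (w - ∑ l, g l • D l)| ≤ s)
    (h2 : ∀ k ∈ Ω, σ * s < (1 - (2 * (m : ℝ) - 1) * μ) * |x k + σ * g k|)
    (Λ : ℕ → Finset (Fin N)) (z : ℕ → Fin N → ℝ)
    (hrun : IsOMPRun D ((∑ j, x j • D j) + σ • w) m Λ z) :
    (∀ t < m, ∃ i : Fin N,
        σ * s < |dot (D i) (ompResidual D ((∑ j, x j • D j) + σ • w) (z t))|) ∧
    (∀ i : Fin N, |dot (D i) (ompResidual D ((∑ j, x j • D j) + σ • w) (z m))| ≤ σ * s) ∧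
    Λ m = Ω := by
  obtain ⟨hΛ0, hz0, hstep⟩ := hrun
  set y := (∑ j, x j • D j) + σ • w with hy
  have hm1 : (1 : ℝ) ≤ m := by exact_mod_cast hm
  have hΩne : Ω.Nonempty := Finset.card_pos.mp (by omega)
  -- decomposition of the residual
  have hdec : ∀ (u : Fin N → ℝ) (i : Fin N), dot (D i) (ompResidual D y u) =
      dot (D i) (∑ l, (x l + σ * g l - u l) • D l) + σ * dot (D i) (w - ∑ l, g l • D l) := by
    intro u i
    rw [← aux_dot_smul_right, ← aux_dot_add_right]
    congr 1
    rw [hy]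
    unfold ompResidual
    simp only [sub_smul, add_smul, mul_smul, Finset.sum_sub_distrib, Finset.sum_add_distrib,
      smul_sub, Finset.smul_sum]
    abel
  have hdecΩ : ∀ (u : Fin N → ℝ) (i : Fin N), i ∈ Ω → dot (D i) (ompResidual D y u) =
      dot (D i) (∑ l, (x l + σ * g l - u l) • D l) := by
    intro u i hi
    rw [hdec, hgo i hi]; ring
  -- one step
  have hone : ∀ (S : Finset (Fin N)) (u : Fin N → ℝ), S ⊆ Ω → S.card < m →
      (∀ i, i ∉ S → u i = 0) →
      ∃ i₀ ∈ Ω, σ * s < |dot (D i₀) (ompResidual D y u)| ∧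
        ∀ i, i ∉ Ω → |dot (D i) (ompResidual D y u)| < |dot (D i₀) (ompResidual D y u)| := by
    intro S u hS hSm hu
    set c : Fin N → ℝ := fun l => x l + σ * g l - u l with hcdef
    have hc : ∀ l, l ∉ Ω → c l = 0 := by
      intro l hl
      simp [hcdef, hx l hl, hg l hl, hu l (fun h => hl (hS h))]
    obtain ⟨i₀, hi₀, hmax⟩ := aux_exists_max Ω hΩne c
    obtain ⟨k, hkΩ, hkS⟩ : ∃ k ∈ Ω, k ∉ S :=
      Finset.exists_mem_notMem_of_card_lt_card (by omega)
    have hck : c k = x k + σ * g k := by simp [hcdef, hu k hkS]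
    have hk := h2 k hkΩ
    rw [← hck] at hk
    have hk2 : σ * s < (1 - (2 * (m : ℝ) - 1) * μ) * |c i₀| :=
      hk.trans_le (mul_le_mul_of_nonneg_left (hmax k hkΩ) hMIP.le)
    have hlow := aux_diag D hunit μ hμ Ω c hc i₀ hi₀ hmax
    rw [hcard] at hlow
    have hnn : 0 ≤ m * μ * |c i₀| := by positivity
    refine ⟨i₀, hi₀, ?_, ?_⟩
    · rw [hdecΩ u i₀ hi₀]
      change _ < |dot (D i₀) (∑ l, c l • D l)|
      nlinarith
    · intro i hi
      rw [hdecΩ u i₀ hi₀, hdec u i]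
      change |dot (D i) (∑ l, c l • D l) + _| < |dot (D i₀) (∑ l, c l • D l)|
      have hcr := aux_cross D μ hμ Ω c |c i₀| hmax i hi
      rw [← aux_sum_supp D Ω c hc, hcard] at hcr
      have h3 := abs_add_le (dot (D i) (∑ l, c l • D l)) (σ * dot (D i) (w - ∑ l, g l • D l))
      rw [abs_mul, abs_of_pos hσ] at h3
      have h4 := mul_le_mul_of_nonneg_left (h1 i hi) hσ.le
      nlinarith
  -- induction
  have hind : ∀ t, t ≤ m → Λ t ⊆ Ω ∧ (Λ t).card = t ∧ (∀ i, i ∉ Λ t → z t i = 0) ∧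
      ∀ j ∈ Λ t, dot (D j) (ompResidual D y (z t)) = 0 := by
    intro t
    induction t with
    | zero =>
      intro _
      simp [hΛ0, hz0]
    | succ t ih =>
      intro ht
      obtain ⟨hsub, hc, hz, ho⟩ := ih (by omega)
      obtain ⟨⟨j, hj, hΛ⟩, hzs, hmin⟩ := hstep t (by omega)
      obtain ⟨i₀, hi₀, hbig, hlt⟩ := hone (Λ t) (z t) hsub (by omega) hz
      have hjΩ : j ∈ Ω := by
        by_contra hjn
        exact absurd (hj i₀) (not_le.mpr (hlt j hjn))
      have hjΛ : j ∉ Λ t := by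
        intro hjm
        have h5 := hj i₀
        rw [ho j hjm, abs_zero] at h5
        have : 0 ≤ σ * s := by positivity
        linarith
      refine ⟨?_, ?_, hzs, ?_⟩
      · rw [hΛ]; exact Finset.insert_subset hjΩ hsub
      · rw [hΛ, Finset.card_insert_of_notMem hjΛ, hc]
      · exact fun k hk => aux_orth D hunit y _ _ hzs hmin k hk
  refine ⟨?_, ?_, ?_⟩
  · intro t ht
    obtain ⟨hsub, hc, hz, ho⟩ := hind t ht.le
    obtain ⟨i₀, _, hbig, _⟩ := hone (Λ t) (z t) hsub (by omega) hz
    exact ⟨i₀, hbig⟩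
  · obtain ⟨hsub, hc, hz, ho⟩ := hind m le_rfl
    have hEq : Λ m = Ω := Finset.eq_of_subset_of_card_le hsub (by omega)
    rw [hEq] at hz ho
    set c : Fin N → ℝ := fun l => x l + σ * g l - z m l with hcdef
    have hcs : ∀ l, l ∉ Ω → c l = 0 := by
      intro l hl
      simp [hcdef, hx l hl, hg l hl, hz l hl]
    obtain ⟨i₀, hi₀, hmax⟩ := aux_exists_max Ω hΩne c
    have hlow := aux_diag D hunit μ hμ Ω c hcs i₀ hi₀ hmax
    have h6 := ho i₀ hi₀
    rw [hdecΩ _ i₀ hi₀] at h6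
    change dot (D i₀) (∑ l, c l • D l) = 0 at h6
    rw [h6, abs_zero, hcard] at hlow
    have hpos : 0 < 1 - ((m : ℝ) - 1) * μ := by nlinarith
    have hci : |c i₀| ≤ 0 := by
      by_contra hcon
      have := mul_pos hpos (not_le.mp hcon)
      linarith
    have hc0 : ∀ l, c l = 0 := by
      intro l
      by_cases hl : l ∈ Ω
      · exact abs_nonpos_iff.mp ((hmax l hl).trans hci)
      · exact hcs l hl
    intro i
    by_cases hi : i ∈ Ω
    · rw [ho i hi, abs_zero]; positivity
    · rw [hdec]
      change |dot (D i) (∑ l, c l • D l) + _| ≤ _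
      have : dot (D i) (∑ l, c l • D l) = 0 := by rw [aux_dot_sum_right]; simp [hc0]
      rw [this, zero_add, abs_mul, abs_of_pos hσ]
      exact mul_le_mul_of_nonneg_left (h1 i hi) hσ.le
  · obtain ⟨hsub, hc, hz, ho⟩ := hind m le_rfl
    exact Finset.eq_of_subset_of_card_le hsub (by omega)

lemma aux_exp (N : ℕ) (hN : 2 ≤ N) (a : ℝ) : Real.exp (-(a * Real.log N)) = 1 / (N : ℝ) ^ a := by
  have hN0 : (0 : ℝ) < N := by positivity
  rw [Real.rpow_def_of_pos hN0, Real.exp_neg, one_div, mul_comm]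

/-- The tail bound in closed form. -/
lemma aux_T (N : ℕ) (hN : 2 ≤ N) (α γ : ℝ) (hα : 0 ≤ α) (hγ : 0 < γ) :
    2 / Real.sqrt (2 * π) *
      Real.exp (-(Real.sqrt γ * Real.sqrt (2 * (1 + α) * Real.log N)) ^ 2 / 2) /
        (Real.sqrt γ * Real.sqrt (2 * (1 + α) * Real.log N)) * (N : ℝ) ^ γ =
    1 / Real.sqrt (π * (1 + α) * Real.log N) * (1 / ((N : ℝ) ^ (α * γ) * Real.sqrt γ)) := by
  have hN0 : (0 : ℝ) < N := by positivity
  have hlog : 0 < Real.log N := Real.log_pos (by exact_mod_cast hN)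
  have hL : 0 < (1 + α) * Real.log N := by positivity
  have h1 : -(Real.sqrt γ * Real.sqrt (2 * (1 + α) * Real.log N)) ^ 2 / 2
      = -((α * γ + γ) * Real.log N) := by
    rw [mul_pow, Real.sq_sqrt hγ.le, Real.sq_sqrt (by positivity)]; ring
  rw [h1, aux_exp N hN, Real.rpow_add hN0]
  have h2 : Real.sqrt (2 * π) * Real.sqrt (2 * (1 + α) * Real.log N)
      = 2 * Real.sqrt (π * (1 + α) * Real.log N) := by
    rw [← Real.sqrt_mul (by positivity)]
    have : 2 * π * (2 * (1 + α) * Real.log N) = 2 ^ 2 * (π * (1 + α) * Real.log N) := by ring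
    rw [this, Real.sqrt_mul (by positivity), Real.sqrt_sq (by norm_num)]
  have hA : 0 < Real.sqrt (2 * π) := Real.sqrt_pos.mpr (by positivity)
  have hB : 0 < Real.sqrt (2 * (1 + α) * Real.log N) := Real.sqrt_pos.mpr (by positivity)
  have hC : 0 < Real.sqrt (π * (1 + α) * Real.log N) := Real.sqrt_pos.mpr (by positivity)
  have hG : 0 < Real.sqrt γ := Real.sqrt_pos.mpr hγ
  have hP : 0 < (N : ℝ) ^ γ := Real.rpow_pos_of_pos hN0 _
  have hQ : 0 < (N : ℝ) ^ (α * γ) := Real.rpow_pos_of_pos hN0 _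
  generalize Real.sqrt (2 * π) = A at *
  generalize Real.sqrt (2 * (1 + α) * Real.log N) = B at *
  generalize Real.sqrt (π * (1 + α) * Real.log N) = C at *
  generalize Real.sqrt γ = G at *
  generalize (N : ℝ) ^ γ = P at *
  generalize (N : ℝ) ^ (α * γ) = Q at *
  field_simp
  linarith

/-- Theorem (sharper sufficient condition for OMP*, the stopping-rule variant):
under the MIP condition and `x_min ≥ σ_eff (1 + √β) √(2(1+α) log N)`, with probability
at least `1 - (1/√(π(1+α) log N)) (N^{-α} + N^{-αβ}/√β)` the following holds for
every run of OMP: the stopping criterion `‖Dᵀ r_t‖_∞ ≤ τ`, `τ = σ √(2(1+α) log N)`,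
fails for every `t < m` and holds at `t = m` (so OMP* stops after exactly `m`
iterations) and the estimated support after `m` iterations equals `Ω`. -/
theorem omp_star_exact_support_recovery
    (d N m : ℕ) (D : Fin N → Fin d → ℝ)
    (hunit : ∀ i, dot (D i) (D i) = 1)
    (μ : ℝ) (hcoh : coherence D = μ)
    (x : Fin N → ℝ) (Ω : Finset (Fin N))
    (hsupp : ∀ i, i ∈ Ω ↔ x i ≠ 0) (hcard : Ω.card = m)
    (σ β α : ℝ) (hσ : 0 < σ) (hβ0 : 0 < β) (hβ1 : β < 1) (hα : 0 ≤ α)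
    (hMIP : μ < 1 / (2 * (m : ℝ) - 1))
    (hmN : (m : ℝ) ≤ (N : ℝ) ^ β)
    (hxmin : ∀ i ∈ Ω,
      σ / (1 - (2 * (m : ℝ) - 1) * μ) * (1 + Real.sqrt β) *
        Real.sqrt (2 * (1 + α) * Real.log N) ≤ |x i|) :
    ENNReal.ofReal
        (1 - 1 / Real.sqrt (π * (1 + α) * Real.log N) *
          (1 / (N : ℝ) ^ α + 1 / ((N : ℝ) ^ (α * β) * Real.sqrt β))) ≤
      stdGaussian d
        {w | ∀ (Λ : ℕ → Finset (Fin N)) (z : ℕ → Fin N → ℝ),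
          IsOMPRun D ((∑ j, x j • D j) + σ • w) m Λ z →
            (∀ t < m, ∃ i : Fin N,
              σ * Real.sqrt (2 * (1 + α) * Real.log N) <
                |dot (D i) (ompResidual D ((∑ j, x j • D j) + σ • w) (z t))|) ∧
            (∀ i : Fin N,
              |dot (D i) (ompResidual D ((∑ j, x j • D j) + σ • w) (z m))| ≤
                σ * Real.sqrt (2 * (1 + α) * Real.log N)) ∧
            Λ m = Ω} := by
  classical
  have hprob : IsProbabilityMeasure (_root_.stdGaussian d) := by
    unfold _root_.stdGaussian; infer_instance
  have hμ0 : 0 ≤ μ := by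
    rw [← hcoh]
    apply Real.sSup_nonneg
    rintro _ ⟨i, j, _, rfl⟩
    exact abs_nonneg _
  have hμ : ∀ i j, i ≠ j → |dot (D i) (D j)| ≤ μ := by
    intro i j hij
    rw [← hcoh]
    refine le_csSup ?_ ⟨i, j, hij, rfl⟩
    apply Set.Finite.bddAbove
    refine (Set.finite_range (fun p : Fin N × Fin N => |dot (D p.1) (D p.2)|)).subset ?_
    rintro _ ⟨i, j, _, rfl⟩
    exact ⟨(i, j), rfl⟩
  have hm : 1 ≤ m := by
    by_contra h
    have : m = 0 := by omega
    subst this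
    norm_num at hMIP
    linarith
  have hm1 : (1 : ℝ) ≤ m := by exact_mod_cast hm
  have hκ : 0 < 1 - (2 * (m : ℝ) - 1) * μ := by
    rw [lt_div_iff₀ (by linarith)] at hMIP
    linarith
  have hx : ∀ i, i ∉ Ω → x i = 0 := fun i hi => by
    by_contra h
    exact hi ((hsupp i).mpr h)
  have hmN' : m ≤ N := by
    rw [← hcard]; simpa using Finset.card_le_univ Ω
  rcases (show N = 1 ∨ 2 ≤ N by omega) with hN | hN
  · -- a single atom
    subst hN
    have hΩ : ∀ i, i ∈ Ω := by
      obtain ⟨k, hk⟩ : Ω.Nonempty := Finset.card_pos.mp (by omega)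
      intro i
      rwa [Subsingleton.elim i k]
    have hbad : _root_.stdGaussian d ((fun w => dot (D 0) w) ⁻¹' {-x 0 / σ}) = 0 := by
      rw [← Measure.map_apply (aux_dot_meas _) (measurableSet_singleton _), aux_law _ (hunit 0)]
      have := nullSingletonClass_gaussianReal (μ := 0) (v := 1) one_ne_zero
      exact measure_singleton _
    have hsub : ((fun w => dot (D 0) w) ⁻¹' {-x 0 / σ})ᶜ ⊆
        {w | ∀ (Λ : ℕ → Finset (Fin 1)) (z : ℕ → Fin 1 → ℝ),
          IsOMPRun D ((∑ j, x j • D j) + σ • w) m Λ z →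
            (∀ t < m, ∃ i : Fin 1,
              σ * Real.sqrt (2 * (1 + α) * Real.log (1 : ℕ)) <
                |dot (D i) (ompResidual D ((∑ j, x j • D j) + σ • w) (z t))|) ∧
            (∀ i : Fin 1,
              |dot (D i) (ompResidual D ((∑ j, x j • D j) + σ • w) (z m))| ≤
                σ * Real.sqrt (2 * (1 + α) * Real.log (1 : ℕ))) ∧
            Λ m = Ω} := by
      intro w hw Λ z hrun
      have hw2 : dot (D 0) w ≠ -x 0 / σ := hw
      refine aux_core D hunit μ hμ0 hμ x Ω hx hcard hm hκ σ _ hσ (Real.sqrt_nonneg _) w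
        (fun _ => dot (D 0) w) (fun i hi => absurd (hΩ i) hi) ?_ (fun i hi => absurd (hΩ i) hi)
        ?_ Λ z hrun
      · intro k _
        have hk0 : k = 0 := Subsingleton.elim _ _
        subst hk0
        rw [aux_dot_sub_right, aux_dot_sum_right]
        simp [hunit]
      · intro k _
        have hk0 : k = 0 := Subsingleton.elim _ _
        subst hk0
        have : x 0 + σ * dot (D 0) w ≠ 0 := by
          intro h
          apply hw2
          field_simp
          linarith
        simp only [Nat.cast_one, Real.log_one, mul_zero, Real.sqrt_zero]
        exact mul_pos hκ (abs_pos.mpr this)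
    refine le_trans ?_ (measure_mono hsub)
    rw [prob_compl_eq_one_sub ((aux_dot_meas _) (measurableSet_singleton _)), hbad]
    simp
  · -- at least two atoms
    have hN0 : (0 : ℝ) < N := by positivity
    have hlog : 0 < Real.log N := Real.log_pos (by exact_mod_cast hN)
    set s := Real.sqrt (2 * (1 + α) * Real.log N) with hs
    have hs0 : 0 < s := Real.sqrt_pos.mpr (by positivity)
    have hsβ : 0 < Real.sqrt β := Real.sqrt_pos.mpr hβ0
    choose a ha hao using fun i => aux_proj D Ω (D i)
    set e : Fin N → Fin d → ℝ := fun i => D i - ∑ l, a i l • D l with he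
    have heo : ∀ i, ∀ k ∈ Ω, dot (D k) (e i) = 0 := fun i k hk => hao i k hk
    have heD : ∀ i (c : Fin N → ℝ), (∀ l, l ∉ Ω → c l = 0) →
        dot (e i) (∑ l, c l • D l) = 0 := by
      intro i c hc
      rw [aux_sum_supp D Ω c hc]
      apply Finset.sum_eq_zero
      intro k hk
      rw [aux_dot_comm, heo i k hk, mul_zero]
    have he1 : ∀ i, dot (e i) (e i) ≤ 1 := by
      intro i
      have hD : D i = e i + ∑ l, a i l • D l := by simp [he]
      set p := ∑ l, a i l • D l with hp
      have hep : dot (e i) p = 0 := heD i (a i) (ha i)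
      have h1 : dot (D i) (D i) = dot (e i) (e i) + dot p p := by
        rw [hD, aux_dot_add_right, aux_dot_comm (e i + p), aux_dot_comm (e i + p),
          aux_dot_add_right, aux_dot_add_right, hep, aux_dot_comm p, hep]
        ring
      rw [hunit] at h1
      linarith [aux_dot_self_nonneg p]
    set v : Fin N → Fin d → ℝ := fun i => if i ∈ Ω then D i else e i with hv
    set θ : Fin N → ℝ := fun i => if i ∈ Ω then Real.sqrt β * s else s with hθ
    set T : ℝ → ℝ := fun r => 2 / Real.sqrt (2 * π) * Real.exp (-r ^ 2 / 2) / r with hT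
    have hTpos : ∀ r, 0 < r → 0 ≤ T r := by
      intro r hr
      change 0 ≤ 2 / Real.sqrt (2 * π) * Real.exp (-r ^ 2 / 2) / r
      positivity
    have hθ0 : ∀ i, 0 < θ i := by
      intro i
      by_cases hi : i ∈ Ω
      · simp only [hθ, hi, if_true]; positivity
      · simp only [hθ, hi, if_false]; exact hs0
    have hv1 : ∀ i, dot (v i) (v i) ≤ 1 := by
      intro i
      by_cases hi : i ∈ Ω
      · simp only [hv, hi, if_true]; exact (hunit i).le
      · simp only [hv, hi, if_false]; exact he1 i
    set bad : Set (Fin d → ℝ) := ⋃ i, {w | θ i ≤ |dot (v i) w|} with hbad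
    have hmeas : MeasurableSet bad := by
      apply MeasurableSet.iUnion
      intro i
      exact measurableSet_le measurable_const ((aux_dot_meas _).abs)
    set B := 1 / Real.sqrt (π * (1 + α) * Real.log N) *
          (1 / (N : ℝ) ^ α + 1 / ((N : ℝ) ^ (α * β) * Real.sqrt β)) with hB
    have hB0 : 0 ≤ B := by rw [hB]; positivity
    have hsum : ∑ i, T (θ i) ≤ B := by
      have e1 := aux_T N hN α 1 hα one_pos
      have e2 := aux_T N hN α β hα hβ0
      rw [Real.sqrt_one, one_mul, Real.rpow_one, mul_one, mul_one, ← hs] at e1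
      rw [← hs] at e2
      change T s * N = _ at e1
      change T (Real.sqrt β * s) * (N : ℝ) ^ β = _ at e2
      have hTs := hTpos s hs0
      have hTb := hTpos (Real.sqrt β * s) (by positivity)
      calc ∑ i, T (θ i) ≤ ∑ i, ((if i ∈ Ω then T (Real.sqrt β * s) else 0) + T s) := by
            apply Finset.sum_le_sum
            intro i _
            by_cases hi : i ∈ Ω
            · simp only [hθ, hi, if_true]; linarith
            · simp only [hθ, hi, if_false]; linarith
        _ = m * T (Real.sqrt β * s) + N * T s := by
            rw [Finset.sum_add_distrib]
            simp [hcard]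
        _ ≤ T (Real.sqrt β * s) * (N : ℝ) ^ β + T s * N := by
            have := mul_le_mul_of_nonneg_right hmN hTb
            linarith
        _ = B := by rw [e1, e2, hB]; ring
    have hPbad : _root_.stdGaussian d bad ≤ ENNReal.ofReal B := by
      calc _ ≤ ∑ i, _root_.stdGaussian d {w | θ i ≤ |dot (v i) w|} :=
            measure_iUnion_fintype_le _ _
        _ ≤ ∑ i, ENNReal.ofReal (T (θ i)) :=
            Finset.sum_le_sum fun i _ => aux_tail (v i) (hv1 i) (θ i) (hθ0 i)
        _ = ENNReal.ofReal (∑ i, T (θ i)) :=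
            (ENNReal.ofReal_sum_of_nonneg fun i _ => hTpos _ (hθ0 i)).symm
        _ ≤ _ := ENNReal.ofReal_le_ofReal hsum
    have hgood : ENNReal.ofReal (1 - B) ≤ _root_.stdGaussian d badᶜ := by
      rw [prob_compl_eq_one_sub hmeas, ENNReal.ofReal_sub _ hB0, ENNReal.ofReal_one]
      exact tsub_le_tsub_left hPbad 1
    refine hgood.trans (measure_mono ?_)
    intro w hw Λ z hrun
    have hw' : ∀ i, |dot (v i) w| < θ i := by
      intro i
      by_contra hcon
      exact hw (Set.mem_iUnion.mpr ⟨i, not_lt.mp hcon⟩)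
    obtain ⟨g, hg, hgo⟩ := aux_proj D Ω w
    refine aux_core D hunit μ hμ0 hμ x Ω hx hcard hm hκ σ s hσ hs0.le w g hg hgo ?_ ?_ Λ z hrun
    · intro i hi
      have h1 := hw' i
      simp only [hv, hθ, hi, if_false] at h1
      have h2 : dot (D i) (w - ∑ l, g l • D l) = dot (e i) w := by
        have h3 : dot (e i) (w - ∑ l, g l • D l) = dot (e i) w := by
          rw [aux_dot_sub_right, heD i g hg, sub_zero]
        rw [← h3]
        have h4 : dot (∑ l, a i l • D l) (w - ∑ l, g l • D l) = 0 := by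
          rw [aux_dot_comm, aux_sum_supp D Ω (a i) (ha i)]
          apply Finset.sum_eq_zero
          intro k hk
          rw [aux_dot_comm, hgo k hk, mul_zero]
        rw [aux_dot_comm (e i)]
        simp only [he]
        rw [aux_dot_sub_right _ (D i), aux_dot_comm _ (∑ l, a i l • D l), h4, sub_zero,
          aux_dot_comm]
      rw [h2]
      exact h1.le
    · intro k hk
      obtain ⟨i₀, hi₀, hmax⟩ := aux_exists_max Ω ⟨k, hk⟩ g
      have hlow := aux_diag D hunit μ hμ Ω g hg i₀ hi₀ hmax
      have h1 := hgo i₀ hi₀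
      rw [aux_dot_sub_right, sub_eq_zero] at h1
      rw [← h1, hcard] at hlow
      have h2 := hw' i₀
      simp only [hv, hθ, hi₀, if_true] at h2
      have h3 : (1 - (2 * (m : ℝ) - 1) * μ) * |g k| < Real.sqrt β * s := by
        have h4 : (1 - (2 * (m : ℝ) - 1) * μ) * |g k| ≤ (1 - (2 * (m : ℝ) - 1) * μ) * |g i₀| :=
          mul_le_mul_of_nonneg_left (hmax k hk) hκ.le
        have h5 : 0 ≤ m * μ * |g i₀| := by positivity
        linarith
      have h6 := hxmin k hk
      rw [div_mul_eq_mul_div, div_mul_eq_mul_div, div_le_iff₀ hκ] at h6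
      have h7 : |x k| - σ * |g k| ≤ |x k + σ * g k| := by
        have := abs_sub_abs_le_abs_sub (x k) (-(σ * g k))
        rwa [abs_neg, abs_mul, abs_of_pos hσ, sub_neg_eq_add] at this
      have h8 := mul_le_mul_of_nonneg_left h7 hκ.le
      have h9 := mul_lt_mul_of_pos_left h3 hσ
      nlinarith


end
end

section
/- Let D ∈ R^{d×N} be a dictionary with unit-norm columns d_1,…,d_N and coherence μ, let z ∈ R^N be m-sparse with support Ω, and let r = Dz + σw for some σ > 0 and w ∈ R^d. Suppose μ < 1/(2m−1), m ≤ N^β for some 0 < β < 1, and, with τ = σ√(2(1+α)log N) for some α ≥ 0, the noise satisfies max_{k∈Ω}|⟨d_k, σw⟩| < √β·τ and max_{i∉Ω}|⟨d_i, σw⟩| < τ. If max_{i∈Ω}|z_i| ≥ (σ/(1−(2m−1)μ))·(1+√β)·√(2(1+α)log N), then max_{k∈Ω}|⟨d_k, r⟩| > max_{i∉Ω}|⟨d_i, r⟩|. -/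
open Real

noncomputable section

theorem dot_add_right' {n : ℕ} (u v w : Fin n → ℝ) : dot u (v + w) = dot u v + dot u w := by
  simp [dot, mul_add, Finset.sum_add_distrib]

theorem dot_comb {n N : ℕ} (u : Fin n → ℝ) (z : Fin N → ℝ) (D : Fin N → Fin n → ℝ) :
    dot u (∑ l, z l • D l) = ∑ l, z l * dot u (D l) := by
  simp only [dot, Finset.sum_apply, Pi.smul_apply, smul_eq_mul, Finset.mul_sum]
  rw [Finset.sum_comm]
  refine Finset.sum_congr rfl fun i _ => Finset.sum_congr rfl fun j _ => by ring

theorem abs_dot_le_coherence {d N : ℕ} (D : Fin N → Fin d → ℝ) (i j : Fin N) (h : i ≠ j) :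
    |dot (D i) (D j)| ≤ coherence D := by
  refine le_csSup ?_ ⟨i, j, h, rfl⟩
  refine Set.Finite.bddAbove ?_
  refine (Set.finite_range fun p : Fin N × Fin N => |dot (D p.1) (D p.2)|).subset ?_
  rintro x ⟨a, b, _, rfl⟩
  exact ⟨(a, b), rfl⟩

theorem coherence_nonneg {d N : ℕ} (D : Fin N → Fin d → ℝ) : 0 ≤ coherence D := by
  refine Real.sSup_nonneg ?_
  rintro x ⟨a, b, _, rfl⟩
  exact abs_nonneg _

/-- Lemma (one OMP step selects a support atom): if the noise correlations are
bounded (`max_{k∈Ω} |⟨d_k, σw⟩| < √β τ` and `max_{i∉Ω} |⟨d_i, σw⟩| < τ` with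
`τ = σ√(2(1+α) log N)`), MIP holds, `m ≤ N^β`, and
`max_{i∈Ω} |z_i| ≥ σ_eff (1+√β) √(2(1+α) log N)`, then for `r = Dz + σw`,
`max_{k∈Ω} |⟨d_k, r⟩| > max_{i∉Ω} |⟨d_i, r⟩|`. -/
theorem omp_step_selects_support_atom
    (d N m : ℕ) (D : Fin N → Fin d → ℝ)
    (hunit : ∀ i, dot (D i) (D i) = 1)
    (μ : ℝ) (hcoh : coherence D = μ)
    (z : Fin N → ℝ) (Ω : Finset (Fin N))
    (hsupp : ∀ i, i ∈ Ω ↔ z i ≠ 0) (hcard : Ω.card = m)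
    (σ β α : ℝ) (hσ : 0 < σ) (hβ0 : 0 < β) (hβ1 : β < 1) (hα : 0 ≤ α)
    (hMIP : μ < 1 / (2 * (m : ℝ) - 1))
    (hmN : (m : ℝ) ≤ (N : ℝ) ^ β)
    (w : Fin d → ℝ)
    (hnoise_in : ∀ k ∈ Ω,
      |dot (D k) (σ • w)| < Real.sqrt β * (σ * Real.sqrt (2 * (1 + α) * Real.log N)))
    (hnoise_out : ∀ i ∉ Ω,
      |dot (D i) (σ • w)| < σ * Real.sqrt (2 * (1 + α) * Real.log N))
    (hzmax : ∃ i ∈ Ω,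
      σ / (1 - (2 * (m : ℝ) - 1) * μ) * (1 + Real.sqrt β) *
        Real.sqrt (2 * (1 + α) * Real.log N) ≤ |z i|) :
    ∃ k ∈ Ω, ∀ i ∉ Ω,
      |dot (D i) ((∑ l, z l • D l) + σ • w)| <
        |dot (D k) ((∑ l, z l • D l) + σ • w)| := by
  obtain ⟨i0, hi0, hz0⟩ := hzmax
  obtain ⟨k, hk, hmax⟩ := Finset.exists_max_image Ω (fun l => |z l|) ⟨i0, hi0⟩
  have hm1 : (1 : ℝ) ≤ m := by
    have : 0 < m := hcard ▸ Finset.card_pos.mpr ⟨i0, hi0⟩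
    exact_mod_cast this
  have hμ0 : 0 ≤ μ := hcoh ▸ coherence_nonneg D
  have hμ : ∀ i j, i ≠ j → |dot (D i) (D j)| ≤ μ := fun i j h => hcoh ▸ abs_dot_le_coherence D i j h
  have hpos : 0 < 1 - (2 * (m : ℝ) - 1) * μ := by
    rw [lt_div_iff₀ (by linarith)] at hMIP
    linarith
  have hterm : ∀ i, ∀ l ∈ Ω, i ≠ l → |z l * dot (D i) (D l)| ≤ |z k| * μ := by
    intro i l hl hil
    rw [abs_mul]
    exact mul_le_mul (hmax l hl) (hμ i l hil) (abs_nonneg _) (abs_nonneg _)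
  have hsum : ∀ i, dot (D i) (∑ l, z l • D l) = ∑ l ∈ Ω, z l * dot (D i) (D l) := by
    intro i
    rw [dot_comb]
    symm
    refine Finset.sum_subset (Finset.subset_univ _) fun l _ hl => ?_
    have : z l = 0 := by
      by_contra h
      exact hl ((hsupp l).2 h)
    simp [this]
  have hM : σ * Real.sqrt (2 * (1 + α) * Real.log N) * (1 + Real.sqrt β)
      ≤ |z k| * (1 - (2 * (m : ℝ) - 1) * μ) := by
    have h := hz0.trans (hmax i0 hi0)
    rw [← div_le_iff₀ hpos]
    refine le_trans (le_of_eq ?_) h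
    ring
  refine ⟨k, hk, fun i hi => ?_⟩
  have hin := hnoise_in k hk
  have hout := hnoise_out i hi
  rw [dot_add_right', dot_add_right', hsum, hsum]
  have h1 : |∑ l ∈ Ω, z l * dot (D i) (D l)| ≤ m * (|z k| * μ) := by
    refine (Finset.abs_sum_le_sum_abs _ _).trans ?_
    refine (Finset.sum_le_card_nsmul _ _ (|z k| * μ) fun l hl =>
      hterm i l hl (fun h => hi (h ▸ hl))).trans ?_
    rw [hcard, nsmul_eq_mul]
  have h2 : |∑ l ∈ Ω.erase k, z l * dot (D k) (D l)| ≤ (m - 1) * (|z k| * μ) := by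
    refine (Finset.abs_sum_le_sum_abs _ _).trans ?_
    refine (Finset.sum_le_card_nsmul _ _ (|z k| * μ) fun l hl =>
      hterm k l (Finset.mem_of_mem_erase hl) (Finset.ne_of_mem_erase hl).symm).trans ?_
    rw [nsmul_eq_mul, Finset.cast_card_erase_of_mem hk, hcard]
  rw [← Finset.add_sum_erase Ω (fun l => z l * dot (D k) (D l)) hk]
  simp only [hunit, mul_one]
  set S := ∑ l ∈ Ω.erase k, z l * dot (D k) (D l)
  set T := ∑ l ∈ Ω, z l * dot (D i) (D l)
  set a := dot (D k) (σ • w)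
  set b := dot (D i) (σ • w)
  have h3 : |T + b| ≤ |T| + |b| := abs_add_le _ _
  have h4 : |z k| ≤ |z k + S + a| + |S| + |a| := by
    have e : z k = (z k + S + a) - S - a := by ring
    calc |z k| = |(z k + S + a) - S - a| := by rw [← e]
      _ ≤ |(z k + S + a) - S| + |a| := abs_sub _ _
      _ ≤ _ := by gcongr; exact abs_sub _ _
  nlinarith

end
end

section
/- Let m > 1 be an integer, let 0 ≤ μ < 1/(m−1), and let V = [v_1 … v_m] ∈ R^{m×m} be an orthogonal matrix whose first column is v_1 = (1/√m)·1 (the normalized all-ones vector). Define Y ∈ R^{m×m} to be the matrix whose first row is √((1−(m−1)μ)/m)·1^T and whose k-th row, for k = 2,…,m, is √(1+μ)·v_k^T. Then the columns e_1,…,e_m of Y satisfy ⟨e_i, e_j⟩ = 1 if i = j and ⟨e_i, e_j⟩ = −μ if i ≠ j, for all i, j ∈ [m]. -/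
open Real

noncomputable section

/-- Lemma (explicit construction): let `V = [v_1 … v_m]` be an orthogonal matrix
(columns `V j`, orthonormal) whose first column is the normalized all-ones vector,
and let `Y` be the matrix whose first row is `√((1-(m-1)μ)/m)·1ᵀ` and whose `k`-th
row (`k ≥ 2`) is `√(1+μ)·v_kᵀ`.  Then the columns `e_i = fun k => Y k i` of `Y`
satisfy `⟨e_i, e_j⟩ = 1` if `i = j` and `-μ` otherwise. -/
theorem gram_of_explicit_construction
    (m : ℕ) (hm : 1 < m) (μ : ℝ) (hμ0 : 0 ≤ μ) (hμ : μ < 1 / ((m : ℝ) - 1))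
    (V : Fin m → Fin m → ℝ)
    (horth : ∀ i j : Fin m, dot (V i) (V j) = if i = j then (1 : ℝ) else 0)
    (hfirst : V ⟨0, by omega⟩ = fun _ => 1 / Real.sqrt m) :
    ∀ i j : Fin m,
      dot
        (fun k : Fin m => if k = ⟨0, by omega⟩ then
            Real.sqrt ((1 - ((m : ℝ) - 1) * μ) / m)
          else Real.sqrt (1 + μ) * V k i)
        (fun k : Fin m => if k = ⟨0, by omega⟩ then
            Real.sqrt ((1 - ((m : ℝ) - 1) * μ) / m)
          else Real.sqrt (1 + μ) * V k j)
      = if i = j then (1 : ℝ) else -μ := by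
  intro i j
  have hm1 : (0 : ℝ) < (m : ℝ) - 1 := by
    have : (1 : ℝ) < m := by exact_mod_cast hm
    linarith
  have hm0 : (0 : ℝ) < m := by linarith
  have hc : 0 ≤ (1 - ((m : ℝ) - 1) * μ) / m := by
    apply div_nonneg _ hm0.le
    rw [lt_div_iff₀ hm1] at hμ
    linarith
  have hV : Matrix.of V * (Matrix.of V).transpose = 1 := by
    ext a b
    have := horth a b
    simp only [dot] at this
    simp [Matrix.mul_apply, Matrix.one_apply, this]
  have hV' := mul_eq_one_comm.mp hV
  have hcol : ∑ k, V k i * V k j = if i = j then (1 : ℝ) else 0 := by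
    have := congrFun (congrFun hV' i) j
    simpa [Matrix.mul_apply, Matrix.one_apply] using this
  have hs : Real.sqrt (1 + μ) * Real.sqrt (1 + μ) = 1 + μ :=
    Real.mul_self_sqrt (by linarith)
  have hsm : Real.sqrt m * Real.sqrt m = m := Real.mul_self_sqrt hm0.le
  have key : ∀ k : Fin m,
      (if k = ⟨0, by omega⟩ then Real.sqrt ((1 - ((m : ℝ) - 1) * μ) / m)
          else Real.sqrt (1 + μ) * V k i) *
      (if k = ⟨0, by omega⟩ then Real.sqrt ((1 - ((m : ℝ) - 1) * μ) / m)
          else Real.sqrt (1 + μ) * V k j)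
      = (1 + μ) * (V k i * V k j) + (if k = ⟨0, by omega⟩ then -μ else 0) := by
    intro k
    by_cases hk : k = ⟨0, by omega⟩
    · rw [if_pos hk, if_pos hk, if_pos hk, Real.mul_self_sqrt hc, hk, hfirst]
      simp only []
      rw [div_mul_div_comm, hsm]
      field_simp
      ring
    · rw [if_neg hk, if_neg hk, if_neg hk]
      linear_combination (V k i * V k j) * hs
  simp only [dot]
  rw [Finset.sum_congr rfl (fun k _ => key k), Finset.sum_add_distrib, ← Finset.mul_sum, hcol]
  by_cases h : i = j <;> simp [h]

end
end

section
/- Let m ≥ 2 and d, N be integers with m < d < N, let 0 < L < 1, and let μ satisfy 0 < μ < 1/(m−1), m ≤ (3 − L − √(8 − 8L))/L, and (1+L(m−1))·(1 − √(1 − 4L(2m−1−Lm)/(1+L(m−1))²))/(2(2m−1−Lm)) ≤ μ ≤ (1+L(m−1))·(1 + √(1 − 4L(2m−1−Lm)/(1+L(m−1))²))/(2(2m−1−Lm)). Let e_1,…,e_m ∈ R^m satisfy ⟨e_i,e_j⟩ = 1 if i = j and −μ otherwise, let ē = (Σ_{i∈[m]} e_i)/‖Σ_{i∈[m]} e_i‖,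 set μ̃ = μ²m/(1−(m−1)μ), and let r_{m+1},…,r_N be unit vectors in R^{d−m} with max_{m+1≤i<j≤N}|⟨r_i,r_j⟩| ≤ L. Then the dictionary D ∈ R^{d×N} whose columns are d_i = (e_i; 0) for 1 ≤ i ≤ m and d_i = (√μ̃·ē; √(1−μ̃)·r_i) for m+1 ≤ i ≤ N has unit-norm columns and coherence exactly μ. -/
open Real

noncomputable section

/-- Dot product on `ℝ^m × ℝ^k`, decomposing coordinatewise. -/
def pdot {m k : ℕ} (u v : (Fin m → ℝ) × (Fin k → ℝ)) : ℝ :=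
  dot u.1 v.1 + dot u.2 v.2

/-- Coherence of a dictionary whose columns live in `ℝ^m × ℝ^k`. -/
def pcoherence {m k N : ℕ} (D : Fin N → (Fin m → ℝ) × (Fin k → ℝ)) : ℝ :=
  sSup {x : ℝ | ∃ i j : Fin N, i ≠ j ∧ x = |pdot (D i) (D j)|}

/-- The normalized sum `ē = (∑ e_i) / ‖∑ e_i‖`. -/
def ebar {m : ℕ} (e : Fin m → Fin m → ℝ) : Fin m → ℝ :=
  (Real.sqrt (dot (∑ i, e i) (∑ i, e i)))⁻¹ • ∑ i, e i

/-- The columns of the dictionary constructed in the proof of the near-tightness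
theorem: `d_i = (e_i; 0)` for `i < m` and `d_i = (√μ̃ ē; √(1-μ̃) r_i)` for `i ≥ m`,
where `μ̃ = μ²m/(1-(m-1)μ)`. -/
def Dcol (m d N : ℕ) (μ : ℝ) (e : Fin m → Fin m → ℝ)
    (r : Fin N → Fin (d - m) → ℝ) (i : Fin N) : (Fin m → ℝ) × (Fin (d - m) → ℝ) :=
  if h : (i : ℕ) < m then (e ⟨i, h⟩, 0)
  else (Real.sqrt (μ ^ 2 * m / (1 - ((m : ℝ) - 1) * μ)) • ebar e,
        Real.sqrt (1 - μ ^ 2 * m / (1 - ((m : ℝ) - 1) * μ)) • r i)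

theorem dot_eq {n : ℕ} (u v : Fin n → ℝ) : dot u v = u ⬝ᵥ v := rfl

theorem dot_sum_e {m : ℕ} {μ : ℝ} (e : Fin m → Fin m → ℝ)
    (he : ∀ i j : Fin m, dot (e i) (e j) = if i = j then (1 : ℝ) else -μ) (j : Fin m) :
    dot (∑ i, e i) (e j) = 1 - ((m : ℝ) - 1) * μ := by
  rw [dot_eq, sum_dotProduct]
  have : ∀ i, e i ⬝ᵥ e j = -μ + (if i = j then (1 + μ) else 0) := by
    intro i
    rw [← dot_eq, he]
    split_ifs <;> ring
  simp only [this, Finset.sum_add_distrib, Finset.sum_ite_eq', Finset.sum_const,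
    Finset.card_univ, Fintype.card_fin, nsmul_eq_mul, Finset.mem_univ, if_true]
  ring

theorem dot_sum_sum {m : ℕ} {μ : ℝ} (e : Fin m → Fin m → ℝ)
    (he : ∀ i j : Fin m, dot (e i) (e j) = if i = j then (1 : ℝ) else -μ) :
    dot (∑ i, e i) (∑ i, e i) = m * (1 - ((m : ℝ) - 1) * μ) := by
  have h := dot_sum_e e he
  simp only [dot_eq] at h ⊢
  rw [dotProduct_sum]
  simp [h]
  ring

theorem quad_le {m L μ : ℝ} (hm : 2 ≤ m) (hL0 : 0 < L) (hL1 : L < 1)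
    (hmL : m ≤ (3 - L - Real.sqrt (8 - 8 * L)) / L)
    (hμlo : (1 + L * (m - 1)) *
        (1 - Real.sqrt (1 - 4 * L * (2 * m - 1 - L * m) /
          (1 + L * (m - 1)) ^ 2)) / (2 * (2 * m - 1 - L * m)) ≤ μ)
    (hμhi : μ ≤ (1 + L * (m - 1)) *
        (1 + Real.sqrt (1 - 4 * L * (2 * m - 1 - L * m) /
          (1 + L * (m - 1)) ^ 2)) / (2 * (2 * m - 1 - L * m))) :
    μ ^ 2 * (2 * m - 1 - L * m) - (1 + L * (m - 1)) * μ + L ≤ 0 := by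
  have hA : 0 < 2 * m - 1 - L * m := by nlinarith
  have hB : 0 < 1 + L * (m - 1) := by nlinarith
  have hdisc : 0 ≤ (1 + L * (m - 1)) ^ 2 - 4 * L * (2 * m - 1 - L * m) := by
    rw [le_div_iff₀ hL0] at hmL
    have h0 := Real.sqrt_nonneg (8 - 8 * L)
    have h1 := Real.sq_sqrt (show 0 ≤ 8 - 8 * L by linarith)
    have h2 : Real.sqrt (8 - 8 * L) ≤ 3 - L - m * L := by linarith
    nlinarith [mul_self_le_mul_self h0 h2]
  generalize hAd : 2 * m - 1 - L * m = A at *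
  generalize hBd : 1 + L * (m - 1) = B at *
  have hs : 0 ≤ 1 - 4 * L * A / B ^ 2 := by
    rw [sub_nonneg, div_le_one (by positivity)]
    linarith
  have hs2 := Real.sq_sqrt hs
  generalize Real.sqrt (1 - 4 * L * A / B ^ 2) = s at *
  rw [div_le_iff₀ (by positivity)] at hμlo
  rw [le_div_iff₀ (by positivity)] at hμhi
  have hs3 : B ^ 2 * s ^ 2 = B ^ 2 - 4 * L * A := by
    rw [hs2]; field_simp
  have h4 : (2 * A * μ - B) ^ 2 ≤ (B * s) ^ 2 := by
    apply sq_le_sq'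
    · linarith
    · linarith
  have h5 : 4 * A * (μ ^ 2 * A - B * μ + L) ≤ 0 := by nlinarith
  by_contra h
  push Not at h
  have := mul_pos (mul_pos four_pos hA) h
  linarith

/-- Lemma (coherence of the constructed dictionary): under the stated conditions on
`m, μ, L`, if the Gram matrix of `e_1, …, e_m` has unit diagonal and off-diagonal
entries `-μ`, and `r_{m+1}, …, r_N` are unit vectors with pairwise absolute inner
products at most `L`, then the constructed dictionary has unit-norm columns and
coherence exactly `μ`. -/
theorem constructed_dictionary_coherence
    (m d N : ℕ) (hm : 2 ≤ m) (hmd : m < d) (hdN : d < N)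
    (L : ℝ) (hL0 : 0 < L) (hL1 : L < 1)
    (μ : ℝ) (hμ0 : 0 < μ) (hμ1 : μ < 1 / ((m : ℝ) - 1))
    (hmL : (m : ℝ) ≤ (3 - L - Real.sqrt (8 - 8 * L)) / L)
    (hμlo : (1 + L * ((m : ℝ) - 1)) *
        (1 - Real.sqrt (1 - 4 * L * (2 * (m : ℝ) - 1 - L * m) /
          (1 + L * ((m : ℝ) - 1)) ^ 2)) / (2 * (2 * (m : ℝ) - 1 - L * m)) ≤ μ)
    (hμhi : μ ≤ (1 + L * ((m : ℝ) - 1)) *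
        (1 + Real.sqrt (1 - 4 * L * (2 * (m : ℝ) - 1 - L * m) /
          (1 + L * ((m : ℝ) - 1)) ^ 2)) / (2 * (2 * (m : ℝ) - 1 - L * m)))
    (e : Fin m → Fin m → ℝ)
    (he : ∀ i j : Fin m, dot (e i) (e j) = if i = j then (1 : ℝ) else -μ)
    (r : Fin N → Fin (d - m) → ℝ)
    (hr_unit : ∀ i : Fin N, m ≤ (i : ℕ) → dot (r i) (r i) = 1)
    (hr_coh : ∀ i j : Fin N, m ≤ (i : ℕ) → m ≤ (j : ℕ) → i ≠ j →
      |dot (r i) (r j)| ≤ L) :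
    (∀ i : Fin N, pdot (Dcol m d N μ e r i) (Dcol m d N μ e r i) = 1) ∧
    pcoherence (Dcol m d N μ e r) = μ := by
  have hm' : (2 : ℝ) ≤ m := by exact_mod_cast hm
  have hq := quad_le hm' hL0 hL1 hmL hμlo hμhi
  have hc : 0 < 1 - ((m : ℝ) - 1) * μ := by
    rw [lt_div_iff₀ (by linarith)] at hμ1
    linarith
  have hμ1' : μ < 1 := by nlinarith
  have hS := dot_sum_e e he
  have hSS := dot_sum_sum e he
  set c := 1 - ((m : ℝ) - 1) * μ with hcd
  set t := μ ^ 2 * m / c with ht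
  have htc : t * c = μ ^ 2 * m := by rw [ht]; field_simp
  have ht0 : 0 ≤ t := by positivity
  have hkey : t + (1 - t) * L ≤ μ := by
    have : (t + (1 - t) * L - μ) * c ≤ 0 := by
      have : (t + (1 - t) * L - μ) * c = μ ^ 2 * m * (1 - L) + (L - μ) * c := by
        rw [← htc]; ring
      rw [this, hcd]
      linarith
    nlinarith
  have ht1 : t ≤ 1 := by nlinarith
  have hmc : 0 < (m : ℝ) * c := by positivity
  have hbb : dot (ebar e) (ebar e) = 1 := by
    unfold ebar
    rw [hSS]
    rw [dot_eq] at hSS ⊢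
    rw [smul_dotProduct, dotProduct_smul, hSS, smul_eq_mul, smul_eq_mul]
    have h1 := Real.sq_sqrt hmc.le
    have h2 := Real.sqrt_pos.mpr hmc
    field_simp
    linarith
  have hbe : ∀ j, Real.sqrt t * dot (ebar e) (e j) = μ := by
    intro j
    have h3 := hS j
    unfold ebar
    rw [hSS]
    rw [dot_eq] at h3 ⊢
    rw [smul_dotProduct, h3, smul_eq_mul]
    have h2 := Real.sqrt_pos.mpr hmc
    have h4 : Real.sqrt t * Real.sqrt (m * c) = μ * m := by
      rw [← Real.sqrt_mul ht0, ← Real.sqrt_sq (show 0 ≤ μ * m by positivity)]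
      congr 1
      linear_combination (m : ℝ) * htc
    have h5 : Real.sqrt (m * c) ^ 2 = m * c := Real.sq_sqrt hmc.le
    have h6 : Real.sqrt t * c = μ * Real.sqrt (m * c) := by
      have hm0 : (m : ℝ) ≠ 0 := by positivity
      apply mul_left_cancel₀ hm0
      apply mul_right_cancel₀ h2.ne'
      linear_combination (m : ℝ) * c * h4 - (m : ℝ) * μ * h5
    field_simp
    linarith [h6]
  have hst := Real.mul_self_sqrt ht0
  have hst1 := Real.mul_self_sqrt (sub_nonneg.mpr ht1)
  have P1 : ∀ i j : Fin N, ∀ (hi : (i : ℕ) < m) (hj : (j : ℕ) < m),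
      pdot (Dcol m d N μ e r i) (Dcol m d N μ e r j) = if i = j then 1 else -μ := by
    intro i j hi hj
    have := he ⟨i, hi⟩ ⟨j, hj⟩
    simp only [Dcol, hi, hj, dif_pos, pdot, this]
    simp [dot, Fin.ext_iff]
  have P2 : ∀ i j : Fin N, ∀ (hi : ¬ (i : ℕ) < m) (hj : (j : ℕ) < m),
      pdot (Dcol m d N μ e r i) (Dcol m d N μ e r j) = μ := by
    intro i j hi hj
    have := hbe ⟨j, hj⟩
    simp only [Dcol, hi, hj, dif_pos, dif_neg, not_false_eq_true, pdot]
    rw [dot_eq] at this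
    rw [dot_eq, dot_eq, smul_dotProduct, dotProduct_zero, add_zero, smul_eq_mul]
    exact this
  have P3 : ∀ i j : Fin N, ∀ (hi : ¬ (i : ℕ) < m) (hj : ¬ (j : ℕ) < m),
      pdot (Dcol m d N μ e r i) (Dcol m d N μ e r j) = t + (1 - t) * dot (r i) (r j) := by
    intro i j hi hj
    simp only [Dcol, hi, hj, dif_neg, not_false_eq_true, pdot]
    rw [dot_eq] at hbb
    simp only [dot_eq, smul_dotProduct, dotProduct_smul, hbb, smul_eq_mul, ← mul_assoc]
    rw [hst, hst1, mul_one]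
  have Pc : ∀ i j : Fin N, pdot (Dcol m d N μ e r i) (Dcol m d N μ e r j)
      = pdot (Dcol m d N μ e r j) (Dcol m d N μ e r i) := by
    intro i j
    simp only [pdot, dot, mul_comm]
  refine ⟨fun i => ?_, ?_⟩
  · by_cases hi : (i : ℕ) < m
    · simp [P1 i i hi hi]
    · rw [P3 i i hi hi, hr_unit i (not_lt.mp hi)]
      ring
  · apply IsGreatest.csSup_eq
    constructor
    · have h01 : (⟨0, by omega⟩ : Fin N) ≠ ⟨1, by omega⟩ := by simp [Fin.ext_iff]
      refine ⟨⟨0, by omega⟩, ⟨1, by omega⟩, h01, ?_⟩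
      rw [P1 _ _ (show 0 < m by omega) (show 1 < m by omega), if_neg h01, abs_neg,
        abs_of_pos hμ0]
    · rintro x ⟨i, j, hij, rfl⟩
      by_cases hi : (i : ℕ) < m <;> by_cases hj : (j : ℕ) < m
      · rw [P1 i j hi hj, if_neg hij, abs_neg, abs_of_pos hμ0]
      · rw [Pc, P2 j i hj hi, abs_of_pos hμ0]
      · rw [P2 i j hi hj, abs_of_pos hμ0]
      · rw [P3 i j hi hj]
        have h := abs_le.mp (hr_coh i j (not_lt.mp hi) (not_lt.mp hj) hij)
        have h1 := mul_le_mul_of_nonneg_left h.1 (sub_nonneg.mpr ht1)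
        have h2 := mul_le_mul_of_nonneg_left h.2 (sub_nonneg.mpr ht1)
        rw [abs_le]
        constructor <;> linarith

end
end

section
/- Let 0 < L < 1 and let m ≥ 1 be an integer with m ≤ (3 − L − √(8 − 8L))/L. Then 4L(2m−1−Lm) ≤ (1+L(m−1))², so the closed interval [(1+L(m−1))·(1 − √(1 − 4L(2m−1−Lm)/(1+L(m−1))²))/(2(2m−1−Lm)), (1+L(m−1))·(1 + √(1 − 4L(2m−1−Lm)/(1+L(m−1))²))/(2(2m−1−Lm))] is well defined and nonempty. Moreover, for every μ in this interval with 0 < μ < 1/(m−1), one has mμ²/(1−(m−1)μ) + (1 − mμ²/(1−(m−1)μ))·L ≤ μ, equivalently μ²(2m−1−Lm) − μ(1+L(m−1)) + L ≤ 0. -/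
open Real

/-- Lemma (the coherence interval is well defined, nonempty, and its elements satisfy
the key quadratic inequality): for `0 < L < 1` and an integer `m ≥ 1` with
`m ≤ (3 - L - √(8-8L))/L`, one has `4L(2m-1-Lm) ≤ (1+L(m-1))²` (so the interval
bounds are real and the interval is nonempty), and every `μ` in the interval with
`0 < μ` and `μ(m-1) < 1` satisfies
`mμ²/(1-(m-1)μ) + (1 - mμ²/(1-(m-1)μ))·L ≤ μ`, equivalently
`μ²(2m-1-Lm) - μ(1+L(m-1)) + L ≤ 0`. -/
theorem coherence_interval_nonempty_and_quadratic
    (L : ℝ) (hL0 : 0 < L) (hL1 : L < 1) (m : ℕ) (hm : 1 ≤ m)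
    (hmL : (m : ℝ) ≤ (3 - L - Real.sqrt (8 - 8 * L)) / L) :
    4 * L * (2 * (m : ℝ) - 1 - L * m) ≤ (1 + L * ((m : ℝ) - 1)) ^ 2 ∧
    (1 + L * ((m : ℝ) - 1)) *
        (1 - Real.sqrt (1 - 4 * L * (2 * (m : ℝ) - 1 - L * m) /
          (1 + L * ((m : ℝ) - 1)) ^ 2)) / (2 * (2 * (m : ℝ) - 1 - L * m)) ≤
      (1 + L * ((m : ℝ) - 1)) *
        (1 + Real.sqrt (1 - 4 * L * (2 * (m : ℝ) - 1 - L * m) /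
          (1 + L * ((m : ℝ) - 1)) ^ 2)) / (2 * (2 * (m : ℝ) - 1 - L * m)) ∧
    ∀ μ : ℝ, 0 < μ → μ * ((m : ℝ) - 1) < 1 →
      (1 + L * ((m : ℝ) - 1)) *
          (1 - Real.sqrt (1 - 4 * L * (2 * (m : ℝ) - 1 - L * m) /
            (1 + L * ((m : ℝ) - 1)) ^ 2)) / (2 * (2 * (m : ℝ) - 1 - L * m)) ≤ μ →
      μ ≤ (1 + L * ((m : ℝ) - 1)) *
          (1 + Real.sqrt (1 - 4 * L * (2 * (m : ℝ) - 1 - L * m) /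
            (1 + L * ((m : ℝ) - 1)) ^ 2)) / (2 * (2 * (m : ℝ) - 1 - L * m)) →
      ((m : ℝ) * μ ^ 2 / (1 - ((m : ℝ) - 1) * μ) +
          (1 - (m : ℝ) * μ ^ 2 / (1 - ((m : ℝ) - 1) * μ)) * L ≤ μ ∧
        μ ^ 2 * (2 * (m : ℝ) - 1 - L * m) - μ * (1 + L * ((m : ℝ) - 1)) + L ≤ 0) := by
  have hm1 : (1 : ℝ) ≤ m := by exact_mod_cast hm
  generalize (m : ℝ) = x at *
  have hA : 0 < 2 * x - 1 - L * x := by nlinarith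
  have hB : 0 < 1 + L * (x - 1) := by nlinarith
  have hdisc : 4 * L * (2 * x - 1 - L * x) ≤ (1 + L * (x - 1)) ^ 2 := by
    rw [le_div_iff₀ hL0] at hmL
    have h0 : 0 ≤ Real.sqrt (8 - 8 * L) := Real.sqrt_nonneg _
    have h1 : Real.sqrt (8 - 8 * L) ^ 2 = 8 - 8 * L := Real.sq_sqrt (by linarith)
    have h2 : Real.sqrt (8 - 8 * L) ^ 2 ≤ (3 - L - x * L) ^ 2 :=
      pow_le_pow_left₀ h0 (by linarith) 2
    nlinarith
  have hs0 : 0 ≤ Real.sqrt (1 - 4 * L * (2 * x - 1 - L * x) / (1 + L * (x - 1)) ^ 2) :=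
    Real.sqrt_nonneg _
  have hs : (1 + L * (x - 1)) ^ 2 *
      Real.sqrt (1 - 4 * L * (2 * x - 1 - L * x) / (1 + L * (x - 1)) ^ 2) ^ 2
      = (1 + L * (x - 1)) ^ 2 - 4 * L * (2 * x - 1 - L * x) := by
    rw [Real.sq_sqrt]
    · rw [mul_sub, mul_one, mul_div_cancel₀ _ (by positivity)]
    · rw [sub_nonneg, div_le_one (by positivity)]
      exact hdisc
  clear hmL
  refine ⟨hdisc, ?_, ?_⟩
  · generalize Real.sqrt _ = s at *
    apply div_le_div_of_nonneg_right _ (by linarith)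
    apply mul_le_mul_of_nonneg_left _ hB.le
    linarith
  · intro μ hμ hμm h1 h2
    generalize Real.sqrt _ = s at *
    rw [div_le_iff₀ (by linarith)] at h1
    rw [le_div_iff₀ (by linarith)] at h2
    have hq : μ ^ 2 * (2 * x - 1 - L * x) - μ * (1 + L * (x - 1)) + L ≤ 0 := by
      generalize 2 * x - 1 - L * x = A at *
      generalize 1 + L * (x - 1) = B at *
      have h3 : (2 * A * μ - B) ^ 2 ≤ (B * s) ^ 2 := by
        apply sq_le_sq'
        · linarith
        · linarith
      have h4 : A * (μ ^ 2 * A - μ * B + L) ≤ 0 := by nlinarith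
      by_contra h
      push Not at h
      exact absurd (mul_pos hA h) (not_lt.mpr h4)
    refine ⟨?_, hq⟩
    have hd : 0 < 1 - (x - 1) * μ := by linarith
    have h5 : x * μ ^ 2 / (1 - (x - 1) * μ) * (1 - L) ≤ μ - L := by
      rw [div_mul_eq_mul_div, div_le_iff₀ hd]
      linarith
    linarith
end

section
/- Let D ∈ R^{d×N} be a dictionary with unit-norm columns d_1,…,d_N and coherence μ, let z ∈ R^N be supported on a set Ω of size m with max_{i∈Ω}|z_i| ≥ (σ/(1−(2m−1)μ))·(1+√β)·√(2(1+α)log N) for some α ≥ 0, σ > 0 and 0 < β < 1. Suppose μ < 1/(2m−1), and that w ∈ R^d satisfies max_{k∈Ω}|⟨d_k, σw⟩| < √β·τ where τ = σ√(2(1+α)log N). Then max_{i∈[N]} |⟨d_i, Dz + σw⟩| > τ; in particular the OMP* stopping criterion ‖D^T(Dz+σw)‖_∞ ≤ τ is not triggered. -/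
open Real

noncomputable section

/-- Lemma (OMP* does not stop early): if `z` is supported on `Ω` of size `m` with
`max_{i∈Ω}|z_i| ≥ σ_eff (1+√β)√(2(1+α) log N)`, MIP holds, and the noise satisfies
`max_{k∈Ω}|⟨d_k, σw⟩| < √β τ` with `τ = σ√(2(1+α) log N)`, then
`max_{i∈[N]} |⟨d_i, Dz + σw⟩| > τ`, i.e. the OMP* stopping criterion
`‖Dᵀ(Dz+σw)‖_∞ ≤ τ` is not triggered. -/
theorem omp_star_does_not_stop_early
    (d N m : ℕ) (D : Fin N → Fin d → ℝ)
    (hunit : ∀ i, dot (D i) (D i) = 1)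
    (μ : ℝ) (hcoh : coherence D = μ)
    (z : Fin N → ℝ) (Ω : Finset (Fin N))
    (hsupp : ∀ i ∉ Ω, z i = 0) (hcard : Ω.card = m)
    (σ β α : ℝ) (hσ : 0 < σ) (hα : 0 ≤ α) (hβ0 : 0 < β) (hβ1 : β < 1)
    (hMIP : μ < 1 / (2 * (m : ℝ) - 1))
    (hzmax : ∃ i ∈ Ω,
      σ / (1 - (2 * (m : ℝ) - 1) * μ) * (1 + Real.sqrt β) *
        Real.sqrt (2 * (1 + α) * Real.log N) ≤ |z i|)
    (w : Fin d → ℝ)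
    (hnoise : ∀ k ∈ Ω,
      |dot (D k) (σ • w)| < Real.sqrt β * (σ * Real.sqrt (2 * (1 + α) * Real.log N))) :
    ∃ i : Fin N,
      σ * Real.sqrt (2 * (1 + α) * Real.log N) <
        |dot (D i) ((∑ l, z l • D l) + σ • w)| := by
  obtain ⟨i0, hi0, hz0⟩ := hzmax
  obtain ⟨k, hk, hmax⟩ := Finset.exists_max_image Ω (fun i => |z i|) ⟨i0, hi0⟩
  have hn := hnoise k hk
  set s := Real.sqrt (2 * (1 + α) * Real.log N) with hs
  have hm1 : (1 : ℝ) ≤ m := by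
    have : 1 ≤ m := by
      rw [← hcard]
      exact Finset.card_pos.mpr ⟨i0, hi0⟩
    exact_mod_cast this
  have hμ0 : 0 ≤ μ := by
    rw [← hcoh]
    apply Real.sSup_nonneg
    rintro x ⟨i, j, _, rfl⟩
    exact abs_nonneg _
  have hfin : BddAbove {x : ℝ | ∃ i j : Fin N, i ≠ j ∧ x = |dot (D i) (D j)|} := by
    apply Set.Finite.bddAbove
    apply (Set.finite_range (fun p : Fin N × Fin N => |dot (D p.1) (D p.2)|)).subset
    rintro x ⟨i, j, _, rfl⟩
    exact ⟨(i, j), rfl⟩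
  have hle : ∀ i j : Fin N, i ≠ j → |dot (D i) (D j)| ≤ μ := by
    intro i j hij
    rw [← hcoh]
    exact le_csSup hfin ⟨i, j, hij, rfl⟩
  have hpos : 0 < 1 - (2 * (m : ℝ) - 1) * μ := by
    rw [lt_div_iff₀ (by linarith)] at hMIP
    linarith
  refine ⟨k, ?_⟩
  have hexp : dot (D k) ((∑ l, z l • D l) + σ • w)
      = z k + ∑ l ∈ Ω.erase k, z l * dot (D k) (D l) + dot (D k) (σ • w) := by
    have h1 : dot (D k) ((∑ l, z l • D l) + σ • w)
        = ∑ l, z l * dot (D k) (D l) + dot (D k) (σ • w) := by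
      simp only [dot, Pi.add_apply, Finset.sum_apply, Pi.smul_apply, smul_eq_mul, mul_add,
        Finset.sum_add_distrib, Finset.mul_sum]
      congr 1
      rw [Finset.sum_comm]
      refine Finset.sum_congr rfl fun _ _ => Finset.sum_congr rfl fun _ _ => by ring
    have h2 : ∑ l, z l * dot (D k) (D l) = ∑ l ∈ Ω, z l * dot (D k) (D l) := by
      symm
      apply Finset.sum_subset (Finset.subset_univ _)
      intro l _ hl
      rw [hsupp l hl, zero_mul]
    rw [h1, h2, ← Finset.add_sum_erase Ω _ hk, hunit k, mul_one]
  have hS : |∑ l ∈ Ω.erase k, z l * dot (D k) (D l)| ≤ ((m : ℝ) - 1) * (|z k| * μ) := by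
    refine (Finset.abs_sum_le_sum_abs _ _).trans ?_
    have h3 : ∀ l ∈ Ω.erase k, |z l * dot (D k) (D l)| ≤ |z k| * μ := by
      intro l hl
      rw [abs_mul]
      exact mul_le_mul (hmax l (Finset.mem_of_mem_erase hl))
        (hle k l (Finset.ne_of_mem_erase hl).symm) (abs_nonneg _) (abs_nonneg _)
    refine (Finset.sum_le_card_nsmul _ _ _ h3).trans ?_
    rw [nsmul_eq_mul, Finset.card_erase_of_mem hk, hcard, Nat.cast_sub (by exact_mod_cast hm1)]
    simp
  have hz : σ * (1 + Real.sqrt β) * s ≤ |z k| * (1 - (2 * (m : ℝ) - 1) * μ) := by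
    have h4 := hz0.trans (hmax i0 hi0)
    rw [div_mul_eq_mul_div, div_mul_eq_mul_div, div_le_iff₀ hpos] at h4
    exact h4
  have hmu : 0 ≤ (m : ℝ) * (|z k| * μ) := by positivity
  rw [hexp]
  set S := ∑ l ∈ Ω.erase k, z l * dot (D k) (D l)
  set n := dot (D k) (σ • w)
  have h5 : |z k| ≤ |z k + S + n| + |S| + |n| := by
    have e : z k = (z k + S + n) - S - n := by ring
    have a1 := abs_sub (z k + S + n - S) n
    have a2 := abs_sub (z k + S + n) S
    rw [← e] at a1
    linarith
  nlinarith

end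
end
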